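/- arXiv:1808.05299 — 4 statements merged into one kernel-verified Lean document; each statement's English description precedes it below -/
import Mathlib

section
/- The kernel of δ equals the K-subalgebra of K[x_1,…,x_{2d}] generated by the set {x_1, x_3, …, x_{2d−1}} ∪ {x_{2i−1}x_{2j} − x_{2i}x_{2j−1} : 1 ≤ i < j ≤ d}. (The Nowicki conjecture.) -/
open MvPolynomial

/-!
Write `x_i = X (i, 0)` and `y_i = X (i, 1)`. The proof adds the variables `y_n` one at a time. Let
`f` be a constant involving `y_n` and the `y_i` with `i ∈ S`, of degree `k` in `y_n`, and put
`a = ∂^k f / ∂y_n^k`. With `E` the derivation `y_i ↦ x_i` for `i ∈ S`, the equation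
`E f + x_n * ∂f / ∂y_n = 0` gives `E^k f = (-x_n)^k * a` and `E^(k + 1) f = 0`, and `a` is a
constant free of `y_n`. Since `E` is the raising operator of an `sl₂`-action for which `x_i` and
`y_i`, `i ∈ S`, have weights `1` and `-1`, all components of `a` have weight at least `k`. By
induction `a` is a combination of products of variables `x_i` and minors; the minors have weight
`0`, so only products with at least `k` factors `x_i`, `i ∈ S`, matter. Replacing `k` of these
factors by the minors `x_i * y_n - y_i * x_n` and adjusting the scalars produces a polynomial in the
generators whose `k`-th derivative along `y_n` is `a`. Subtracting it from `f` lowers the degree in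
`y_n`.
-/

namespace Nowicki

section Sl2

variable {R V : Type*} [CommRing R] [AddCommGroup V] [Module R V] {e f h : Module.End R V}

lemma apply_pow_of_lie_eq_two_nsmul (hhe : ⁅h, e⁆ = 2 • e) {v : V} {μ : ℤ} (hv : h v = μ • v)
    (k : ℕ) : h ((e ^ k) v) = (μ + 2 * k) • (e ^ k) v := by
  induction k with
  | zero => simpa using hv
  | succ k ih =>
    have comm : h (e ((e ^ k) v)) = e (h ((e ^ k) v)) + 2 • e ((e ^ k) v) := by
      simpa [Ring.lie_def, sub_eq_iff_eq_add'] using congr($hhe ((e ^ k) v))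
    rw [pow_succ', Module.End.mul_apply, comm, ih, map_zsmul]
    push_cast
    module

lemma pow_succ_apply_of_lie_eq (hef : ⁅e, f⁆ = h) (hhe : ⁅h, e⁆ = 2 • e) {v : V} {μ : ℤ}
    (hv : h v = μ • v) (k : ℕ) :
    (e ^ (k + 1)) (f v) = f ((e ^ (k + 1)) v) + ((k + 1) * (μ + k)) • (e ^ k) v := by
  have comm (u : V) : e (f u) = f (e u) + h u := by
    simpa [Ring.lie_def, sub_eq_iff_eq_add'] using congr($hef u)
  induction k with
  | zero => simp [comm, hv]
  | succ k ih =>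
    rw [pow_succ' e (k + 1), Module.End.mul_apply, ih, map_add, map_zsmul, comm,
      apply_pow_of_lie_eq_two_nsmul hhe hv, Module.End.mul_apply, pow_succ' e k,
      Module.End.mul_apply]
    push_cast
    module

/-- The vector `f v` satisfies the hypotheses with `N` lowered by one, so it vanishes; applying
`e ^ k` to it then yields `e ^ (k - 1) v = 0`, as the coefficient `k * (μ + k - 1)` is nonzero. -/
lemma eq_zero_of_pow_apply_eq_zero_of_weight_le [IsAddTorsionFree V] (hef : ⁅e, f⁆ = h)
    (hhe : ⁅h, e⁆ = 2 • e) (hhf : ⁅h, f⁆ = -(2 • f)) {N : ℕ} :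
    ∀ {k : ℕ} {μ : ℤ} {v : V}, h v = μ • v → μ ≤ -k → (e ^ k) v = 0 → (f ^ N) v = 0 → v = 0 := by
  induction N with
  | zero => intro k μ v _ _ _ hf; simpa using hf
  | succ N ihN =>
    intro k
    induction k with
    | zero => intro μ v _ _ he _; simpa using he
    | succ k ihk =>
      intro μ v hv hμ he hf
      have he' : (e ^ (k + 2)) v = 0 := by rw [pow_succ', Module.End.mul_apply, he, map_zero]
      have hfv : f v = 0 := by
        refine ihN (k := k + 2) (μ := μ - 2) ?_ (by push_cast at hμ ⊢; lia) ?_ ?_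
        · have comm : h (f v) = f (h v) + -(2 • f v) := by
            simpa [Ring.lie_def, sub_eq_iff_eq_add'] using congr($hhf v)
          rw [comm, hv, map_zsmul]
          module
        · rw [pow_succ_apply_of_lie_eq hef hhe hv, he', he, map_zero, smul_zero, add_zero]
        · rwa [pow_succ, Module.End.mul_apply] at hf
      have hsmul : ((k + 1) * (μ + k)) • (e ^ k) v = 0 := by
        simpa [hfv, he] using (pow_succ_apply_of_lie_eq hef hhe hv k).symm
      have hcoeff : ((k + 1) * (μ + k) : ℤ) ≠ 0 :=
        mul_ne_zero (by lia) (by push_cast at hμ; lia)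
      exact ihk hv (by push_cast at hμ; lia) ((smul_eq_zero_iff_right hcoeff).mp hsmul) hf

end Sl2

section Derivation

variable {R A : Type*} [CommRing R] [CommRing A] [Algebra R A] (D : Derivation R A A)

lemma pow_apply_mul_of_apply_eq_zero {c : A} (hc : D c = 0) (a : A) (k : ℕ) :
    (D.toLinearMap ^ k) (c * a) = c * (D.toLinearMap ^ k) a := by
  induction k with
  | zero => simp
  | succ k ih => simp [pow_succ', ih, hc]

lemma pow_succ_apply_mul_of_apply_apply_eq_zero {c : A} (hc : D (D c) = 0) (a : A) (k : ℕ) :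
    (D.toLinearMap ^ (k + 1)) (c * a) =
      c * (D.toLinearMap ^ (k + 1)) a + (k + 1) • (D c * (D.toLinearMap ^ k) a) := by
  induction k with
  | zero => simp [mul_comm]
  | succ k ih =>
    rw [pow_succ', Module.End.mul_apply, ih, map_add, map_nsmul]
    simp only [pow_succ', Module.End.mul_apply, Derivation.coeFn_coe, Derivation.leibniz, hc,
      smul_eq_mul, mul_zero, add_zero, nsmul_eq_mul]
    push_cast
    ring

lemma derivation_eq_zero_of_mem_adjoin {s : Set A} (hs : ∀ a ∈ s, D a = 0) {a : A}
    (ha : a ∈ Algebra.adjoin R s) : D a = 0 :=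
  Derivation.eqOn_adjoin (D2 := 0) hs ha

end Derivation

section PolynomialDerivation

variable {R σ : Type*} [CommRing R] {D D' : Derivation R (MvPolynomial σ R) (MvPolynomial σ R)}

lemma exists_pow_apply_eq_zero (hD : ∀ i, D (D (X i)) = 0) (p : MvPolynomial σ R) :
    ∃ N, (D.toLinearMap ^ N) p = 0 := by
  induction p using MvPolynomial.induction_on with
  | C a => exact ⟨1, by simp⟩
  | add p q hp hq =>
    obtain ⟨a, ha⟩ := hp
    obtain ⟨b, hb⟩ := hq
    exact ⟨a + b, by
      rw [map_add, Module.End.pow_map_zero_of_le (Nat.le_add_right a b) ha,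
        Module.End.pow_map_zero_of_le (Nat.le_add_left b a) hb, add_zero]⟩
  | mul_X p i hp =>
    obtain ⟨a, ha⟩ := hp
    exact ⟨a + 1, by
      rw [mul_comm, pow_succ_apply_mul_of_apply_apply_eq_zero D (hD i),
        Module.End.pow_map_zero_of_le a.le_succ ha, ha, mul_zero, mul_zero, smul_zero, add_zero]⟩

lemma commute_of_forall_X (hD : ∀ i, D (D' (X i)) = D' (D (X i))) :
    Commute D.toLinearMap D'.toLinearMap := by
  have hlie : ⁅D, D'⁆ = 0 := derivation_ext fun i => by
    rw [Derivation.commutator_apply, hD, sub_self, Derivation.zero_apply]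
  rw [commute_iff_lie_eq, ← Derivation.commutator_coe_linear_map, hlie,
    Derivation.coe_zero_linearMap]

lemma derivation_monomial (D : Derivation R (MvPolynomial σ R) (MvPolynomial σ R)) (u : σ →₀ ℕ)
    (r : R) :
    D (monomial u r) =
      r • u.sum fun i k => monomial (u - Finsupp.single i 1) (k : R) * D (X i) := by
  rw [show D = mkDerivation R (fun i => D (X i)) from derivation_ext fun i => by simp,
    mkDerivation_monomial]
  simp

lemma notMem_vars_of_pderiv_eq_zero [IsAddTorsionFree R] {i : σ} {p : MvPolynomial σ R}
    (hp : pderiv i p = 0) : i ∉ p.vars := by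
  intro hi
  obtain ⟨u, hu, hui⟩ := (mem_vars_iff_mem_support i).1 hi
  have hle : Finsupp.single i 1 ≤ u := by
    simpa [Nat.one_le_iff_ne_zero] using hui
  have hcoeff := coeff_pderiv (i := i) p (u - Finsupp.single i 1)
  rw [hp, coeff_zero, tsub_add_cancel_of_le hle, eq_comm] at hcoeff
  rw [← Nat.cast_succ, mul_comm, ← nsmul_eq_mul, smul_eq_zero_iff_right (Nat.succ_ne_zero _)]
    at hcoeff
  exact mem_support_iff.mp hu hcoeff

end PolynomialDerivation

section Weights

variable {R σ : Type*} [CommRing R]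

lemma isWeightedHomogeneous_derivation {M : Type*} [AddCommMonoid M] {w : σ → M}
    {D : Derivation R (MvPolynomial σ R) (MvPolynomial σ R)} {m : M}
    (hD : ∀ i, (D (X i)).IsWeightedHomogeneous w (w i + m)) {n : M} {p : MvPolynomial σ R}
    (hp : p.IsWeightedHomogeneous w n) : (D p).IsWeightedHomogeneous w (n + m) := by
  induction hp using IsWeightedHomogeneous.induction_on with
  | zero => simpa using isWeightedHomogeneous_zero R w (n + m)
  | add p q _ _ hp hq => simpa using hp.add hq
  | monomial u r hu =>
    rw [derivation_monomial, smul_eq_C_mul]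
    refine .C_mul (.sum _ _ _ fun i hi => ?_) r
    have hui := Finsupp.weight_sub_single_add (w := w) (Finsupp.mem_support_iff.mp hi)
    rw [← hu, ← hui, add_assoc]
    exact (isWeightedHomogeneous_monomial w _ _ rfl).mul (hD i)

lemma derivation_eq_zsmul_of_isWeightedHomogeneous {w : σ → ℤ}
    {D : Derivation R (MvPolynomial σ R) (MvPolynomial σ R)} (hD : ∀ i, D (X i) = w i • X i)
    {n : ℤ} {p : MvPolynomial σ R} (hp : p.IsWeightedHomogeneous w n) : D p = n • p := by
  induction hp using IsWeightedHomogeneous.induction_on with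
  | zero => simp
  | add p q _ _ hp hq => rw [map_add, hp, hq, smul_add]
  | monomial u r hu =>
    have hterm : ∀ i ∈ u.support, (monomial (u - Finsupp.single i 1) (u i : R) * D (X i)) =
        (u i • w i) • monomial u 1 := fun i hi => by
      have hle : Finsupp.single i 1 ≤ u := by
        simpa [Nat.one_le_iff_ne_zero] using hi
      rw [hD, mul_smul_comm, X, monomial_mul, tsub_add_cancel_of_le hle, mul_one, ← nsmul_one,
        ← smul_monomial, smul_comm, smul_assoc]
    rw [derivation_monomial, Finsupp.sum, Finset.sum_congr rfl hterm, ← Finset.sum_smul, ← hu,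
      Finsupp.weight_apply, Finsupp.sum, smul_comm, smul_monomial, smul_eq_mul, mul_one]

lemma weightedHomogeneousComponent_apply_of_isWeightedHomogeneous {M : Type*}
    [AddCancelCommMonoid M] {w : σ → M} {L : Module.End R (MvPolynomial σ R)} {m : M}
    (hL : ∀ {n : M} {p : MvPolynomial σ R}, p.IsWeightedHomogeneous w n →
      (L p).IsWeightedHomogeneous w (n + m))
    (n : M) (p : MvPolynomial σ R) :
    weightedHomogeneousComponent w (n + m) (L p) = L (weightedHomogeneousComponent w n p) := by
  classical
  induction p using MvPolynomial.induction_on' with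
  | add p q hp hq => simp only [map_add, hp, hq]
  | monomial u a =>
    have hu := isWeightedHomogeneous_monomial w u a rfl
    rw [weightedHomogeneousComponent_of_mem hu, weightedHomogeneousComponent_of_mem (hL hu)]
    simp [apply_ite L]

lemma weightedHomogeneousComponent_mul_of_isWeightedHomogeneous_zero {M : Type*}
    [AddCancelCommMonoid M] {w : σ → M} {c : MvPolynomial σ R} (hc : c.IsWeightedHomogeneous w 0)
    (n : M) (p : MvPolynomial σ R) :
    weightedHomogeneousComponent w n (c * p) = c * weightedHomogeneousComponent w n p := by
  simpa using weightedHomogeneousComponent_apply_of_isWeightedHomogeneous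
    (L := LinearMap.mulLeft R c) (m := 0) (fun hp => by simpa using hc.mul hp) n p

end Weights

section PartialDerivatives

variable {ι : Type*} (R : Type*) [CommRing R]

/-- The partial derivative with respect to `y_i = X (i, 1)`. -/
noncomputable abbrev pderivY (i : ι) :
    Derivation R (MvPolynomial (ι × Fin 2) R) (MvPolynomial (ι × Fin 2) R) :=
  pderiv (i, 1)

lemma pderivY_pderivY_X (n : ι) (p : ι × Fin 2) : pderivY R n (pderivY R n (X p)) = 0 := by
  classical
  by_cases hp : p = (n, 1)
  · simp [hp]
  · simp [pderiv_X_of_ne hp]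

lemma commute_pderivY_pderivY (i n : ι) :
    Commute (pderivY R i).toLinearMap (pderivY R n).toLinearMap :=
  commute_of_forall_X fun p => by
    classical
    simp only [pderiv_X, Pi.single_apply]
    split_ifs <;> simp

end PartialDerivatives

section Operators

variable {ι : Type*} (R : Type*) [CommRing R] [DecidableEq ι] (S : Finset ι)

/-- The locally nilpotent derivation `x_i ↦ 0`, `y_i ↦ x_i` for `i ∈ S`, which kills the variables
with index outside `S`; here and below `x_i` stands for `X (i, 0)` and `y_i` for `X (i, 1)`. -/
noncomputable def raise :
    Derivation R (MvPolynomial (ι × Fin 2) R) (MvPolynomial (ι × Fin 2) R) :=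
  mkDerivation R fun p => if p.1 ∈ S then ![0, X (p.1, 0)] p.2 else 0

/-- The derivation `x_i ↦ y_i`, `y_i ↦ 0` for `i ∈ S`, which kills the variables with index outside
`S`. It completes `raise R S` to an `sl₂`-action. -/
noncomputable def lower :
    Derivation R (MvPolynomial (ι × Fin 2) R) (MvPolynomial (ι × Fin 2) R) :=
  mkDerivation R fun p => if p.1 ∈ S then ![X (p.1, 1), 0] p.2 else 0

/-- The `sl₂`-weights of the variables: `1` for `x_i` and `-1` for `y_i` if `i ∈ S`, and `0` for
the variables with index outside `S`. -/
def weight (p : ι × Fin 2) : ℤ :=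
  if p.1 ∈ S then ![1, -1] p.2 else 0

/-- The derivation multiplying each variable by its weight: the semisimple element of the
`sl₂`-action. -/
noncomputable def cartan :
    Derivation R (MvPolynomial (ι × Fin 2) R) (MvPolynomial (ι × Fin 2) R) :=
  mkDerivation R fun p => weight S p • X p

variable {R S}

@[simp]
lemma raise_X_zero (i : ι) : raise R S (X (i, 0)) = 0 := by simp [raise]

@[simp]
lemma raise_X_one (i : ι) : raise R S (X (i, 1)) = if i ∈ S then X (i, 0) else 0 := by
  simp [raise]

@[simp]
lemma lower_X_zero (i : ι) : lower R S (X (i, 0)) = if i ∈ S then X (i, 1) else 0 := by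
  simp [lower]

@[simp]
lemma lower_X_one (i : ι) : lower R S (X (i, 1)) = 0 := by simp [lower]

@[simp]
lemma weight_mk_zero (i : ι) : weight S (i, 0) = if i ∈ S then 1 else 0 := by simp [weight]

@[simp]
lemma weight_mk_one (i : ι) : weight S (i, 1) = if i ∈ S then -1 else 0 := by simp [weight]

@[simp]
lemma cartan_X (p : ι × Fin 2) : cartan R S (X p) = weight S p • X p := by simp [cartan]

variable (R S)

lemma lie_raise_lower : ⁅raise R S, lower R S⁆ = cartan R S :=
  derivation_ext <| Prod.forall.mpr fun i c => by
    fin_cases c <;> by_cases hi : i ∈ S <;> simp [Derivation.commutator_apply, hi]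

lemma lie_cartan_raise : ⁅cartan R S, raise R S⁆ = 2 • raise R S :=
  derivation_ext <| Prod.forall.mpr fun i c => by
    fin_cases c <;> by_cases hi : i ∈ S <;> simp [Derivation.commutator_apply, hi, two_smul]

lemma lie_cartan_lower : ⁅cartan R S, lower R S⁆ = -(2 • lower R S) :=
  derivation_ext <| Prod.forall.mpr fun i c => by
    fin_cases c <;> by_cases hi : i ∈ S <;> simp [Derivation.commutator_apply, hi, two_smul]
    ring

lemma lower_lower_X (p : ι × Fin 2) : lower R S (lower R S (X p)) = 0 := by
  obtain ⟨i, c⟩ := p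
  fin_cases c <;> by_cases hi : i ∈ S <;> simp [hi]

lemma commute_pderivY_raise (n : ι) :
    Commute (pderivY R n).toLinearMap (raise R S).toLinearMap :=
  commute_of_forall_X <| Prod.forall.mpr fun i c => by
    fin_cases c <;> simp [pderiv_X, Pi.single_apply, apply_ite (pderiv (n, (1 : Fin 2))),
      apply_ite (raise R S)]

variable {R S}

lemma isWeightedHomogeneous_raise_pow {v : ℤ} {p : MvPolynomial (ι × Fin 2) R}
    (hp : p.IsWeightedHomogeneous (weight S) v) (k : ℕ) :
    (((raise R S).toLinearMap ^ k) p).IsWeightedHomogeneous (weight S) (v + 2 * k) := by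
  have hX : ∀ q, (raise R S (X q)).IsWeightedHomogeneous (weight S) (weight S q + 2) :=
    Prod.forall.mpr fun i c => by
      have hzero := isWeightedHomogeneous_zero R (weight S)
      have hx := isWeightedHomogeneous_X R (weight S) (i, 0)
      fin_cases c <;> by_cases hi : i ∈ S <;> simp_all
  induction k with
  | zero => simpa using hp
  | succ k ih =>
    rw [pow_succ', Module.End.mul_apply, Nat.cast_succ, mul_add_one, ← add_assoc]
    exact isWeightedHomogeneous_derivation hX ih

lemma weightedHomogeneousComponent_raise_pow (k : ℕ) (v : ℤ) (p : MvPolynomial (ι × Fin 2) R) :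
    weightedHomogeneousComponent (weight S) (v + 2 * k) (((raise R S).toLinearMap ^ k) p) =
      ((raise R S).toLinearMap ^ k) (weightedHomogeneousComponent (weight S) v p) :=
  weightedHomogeneousComponent_apply_of_isWeightedHomogeneous
    (fun hp => isWeightedHomogeneous_raise_pow hp k) v p

lemma eq_zero_of_raise_pow_eq_zero_of_weight_le [IsAddTorsionFree R] {k : ℕ} {v : ℤ}
    (hv : v ≤ -k) {p : MvPolynomial (ι × Fin 2) R} (hp : p.IsWeightedHomogeneous (weight S) v)
    (hk : ((raise R S).toLinearMap ^ k) p = 0) : p = 0 := by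
  have : IsAddTorsionFree (MvPolynomial (ι × Fin 2) R) :=
    Module.isTorsionFree_nat_iff_isAddTorsionFree.mp inferInstance
  obtain ⟨N, hN⟩ := exists_pow_apply_eq_zero (lower_lower_X R S) p
  refine eq_zero_of_pow_apply_eq_zero_of_weight_le
    (e := (raise R S).toLinearMap) (f := (lower R S).toLinearMap) (h := (cartan R S).toLinearMap)
    ?_ ?_ ?_ (derivation_eq_zsmul_of_isWeightedHomogeneous cartan_X hp) hv hk hN
  · rw [← Derivation.commutator_coe_linear_map, lie_raise_lower]
  · rw [← Derivation.commutator_coe_linear_map, lie_cartan_raise, Derivation.coe_smul_linearMap]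
  · rw [← Derivation.commutator_coe_linear_map, lie_cartan_lower, Derivation.coe_neg_linearMap,
      Derivation.coe_smul_linearMap]

lemma weightedHomogeneousComponent_raise_pow_eq_zero [IsAddTorsionFree R] {k : ℕ}
    {p : MvPolynomial (ι × Fin 2) R} (hp : ((raise R S).toLinearMap ^ (k + 1)) p = 0) {v : ℤ}
    (hv : v < k) :
    weightedHomogeneousComponent (weight S) v (((raise R S).toLinearMap ^ k) p) = 0 := by
  have hzero : weightedHomogeneousComponent (weight S) (v - 2 * k) p = 0 := by
    refine eq_zero_of_raise_pow_eq_zero_of_weight_le (k := k + 1) (by push_cast; lia)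
      (weightedHomogeneousComponent_isWeightedHomogeneous _ _) ?_
    rw [← weightedHomogeneousComponent_raise_pow, hp, map_zero]
  rw [← sub_add_cancel v (2 * k), weightedHomogeneousComponent_raise_pow, hzero, map_zero]

lemma raise_insert {n : ι} (hn : n ∉ S) :
    raise R (insert n S) = raise R S + (X (n, 0) : MvPolynomial (ι × Fin 2) R) • pderivY R n :=
  derivation_ext <| Prod.forall.mpr fun i c => by
    by_cases hi : i = n
    · subst hi
      fin_cases c <;> simp [hn]
    · fin_cases c <;> simp [hi]

lemma raise_pow_apply_of_raise_insert_eq_zero {n : ι} (hn : n ∉ S)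
    {p : MvPolynomial (ι × Fin 2) R} (hp : raise R (insert n S) p = 0) (k : ℕ) :
    ((raise R S).toLinearMap ^ k) p = (-X (n, 0)) ^ k * ((pderivY R n).toLinearMap ^ k) p := by
  have hraise : raise R S p = -X (n, 0) * pderivY R n p := by
    rw [raise_insert hn] at hp
    simpa [← eq_neg_iff_add_eq_zero] using hp
  induction k with
  | zero => simp
  | succ k ih =>
    have hx : raise R S ((-X (n, 0)) ^ k) = 0 := by simp [Derivation.leibniz_pow]
    calc ((raise R S).toLinearMap ^ (k + 1)) p
        = raise R S ((-X (n, 0)) ^ k * ((pderivY R n).toLinearMap ^ k) p) := by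
          rw [pow_succ', Module.End.mul_apply, ih, Derivation.coeFn_coe]
      _ = (-X (n, 0)) ^ k * raise R S (((pderivY R n).toLinearMap ^ k) p) := by
          simp [hx]
      _ = (-X (n, 0)) ^ k * ((pderivY R n).toLinearMap ^ k) (raise R S p) := by
          congr 1
          exact congr($((commute_pderivY_raise R S n).pow_left k) p).symm
      _ = (-X (n, 0)) ^ (k + 1) * ((pderivY R n).toLinearMap ^ (k + 1)) p := by
          rw [hraise, pow_apply_mul_of_apply_eq_zero _ (by simp), ← mul_assoc, ← pow_succ,
            pow_succ (pderivY R n).toLinearMap, Module.End.mul_apply, Derivation.coeFn_coe]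

end Operators

section Constants

variable {ι : Type*} (R : Type*) [CommRing R]

/-- The minor `x_i y_j - y_i x_j` of the generic `2 × ι` matrix. -/
noncomputable def minor (i j : ι) : MvPolynomial (ι × Fin 2) R :=
  X (i, 0) * X (j, 1) - X (i, 1) * X (j, 0)

/-- All variables `x_i`, and the minors with both column indices in `S`. -/
def generators (S : Finset ι) : Set (MvPolynomial (ι × Fin 2) R) :=
  (Set.range fun i => X (i, 0)) ∪ {p | ∃ i ∈ S, ∃ j ∈ S, p = minor R i j}

/-- The algebra generated by all `x_i` and the minors with both column indices in `S`. -/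
noncomputable def minorAlgebra (S : Finset ι) : Subalgebra R (MvPolynomial (ι × Fin 2) R) :=
  Algebra.adjoin R (generators R S)

/-- The constants of `raise R S` among the polynomials in all `x_i` and in the `y_i` with `i ∈ S`.
The absence of a variable `y_i` is encoded by the vanishing of the derivative along it. -/
noncomputable def constants [DecidableEq ι] (S : Finset ι) :
    Submodule R (MvPolynomial (ι × Fin 2) R) :=
  LinearMap.ker (raise R S).toLinearMap ⊓ ⨅ i ∉ S, LinearMap.ker (pderivY R i).toLinearMap

/-- The `k`-th derivatives along `y_n` of the elements of `minorAlgebra R (insert n S)`. Up to the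
factor `k!`, these include the leading coefficients of the elements of degree `k` in `y_n`. -/
noncomputable def leadingCoeffs [DecidableEq ι] (S : Finset ι) (n : ι) (k : ℕ) :
    Submodule R (MvPolynomial (ι × Fin 2) R) :=
  (minorAlgebra R (insert n S)).toSubmodule.map ((pderivY R n).toLinearMap ^ k)

variable {R} {S : Finset ι} {n : ι} {k : ℕ} {p : MvPolynomial (ι × Fin 2) R}

lemma X_zero_mem_generators (i : ι) : X (i, 0) ∈ generators R S :=
  .inl ⟨i, rfl⟩

lemma minor_mem_generators {i j : ι} (hi : i ∈ S) (hj : j ∈ S) : minor R i j ∈ generators R S :=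
  .inr ⟨i, hi, j, hj, rfl⟩

lemma generators_mono {T : Finset ι} (h : S ⊆ T) : generators R S ⊆ generators R T := by
  rintro _ (⟨i, rfl⟩ | ⟨i, hi, j, hj, rfl⟩)
  · exact X_zero_mem_generators i
  · exact minor_mem_generators (h hi) (h hj)

lemma derivation_minor_eq_zero
    {D : Derivation R (MvPolynomial (ι × Fin 2) R) (MvPolynomial (ι × Fin 2) R)}
    (hD₀ : ∀ i, D (X (i, 0)) = 0) {i j : ι} (hi : D (X (i, 1)) = X (i, 0))
    (hj : D (X (j, 1)) = X (j, 0)) : D (minor R i j) = 0 := by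
  simp only [minor, map_sub, Derivation.leibniz, hD₀, hi, hj, smul_eq_mul]
  ring

lemma minor_mem_of_forall_lt_mem [LinearOrder ι] {A : Subalgebra R (MvPolynomial (ι × Fin 2) R)}
    (hA : ∀ i j, i < j → minor R i j ∈ A) (i j : ι) : minor R i j ∈ A := by
  obtain hij | rfl | hij := lt_trichotomy i j
  · exact hA i j hij
  · simp [minor, mul_comm]
  · have hswap : minor R i j = -minor R j i := by simp only [minor]; ring
    exact hswap ▸ neg_mem (hA j i hij)

lemma pderivY_minor_self {i : ι} (hi : i ≠ n) : pderivY R n (minor R i n) = X (i, 0) := by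
  classical
  simp [minor, hi]

lemma pderivY_eq_zero_of_mem_minorAlgebra {i : ι} (hi : i ∉ S) (hp : p ∈ minorAlgebra R S) :
    pderivY R i p = 0 := by
  classical
  refine derivation_eq_zero_of_mem_adjoin _ ?_ hp
  rintro _ (⟨j, rfl⟩ | ⟨j, hj, l, hl, rfl⟩)
  · simp
  · simp [minor, ne_of_mem_of_not_mem hj hi, ne_of_mem_of_not_mem hl hi]

variable [DecidableEq ι]

@[simp]
lemma mem_constants : p ∈ constants R S ↔ raise R S p = 0 ∧ ∀ i ∉ S, pderivY R i p = 0 := by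
  simp [constants]

lemma raise_eq_zero_of_mem_minorAlgebra (hp : p ∈ minorAlgebra R S) : raise R S p = 0 := by
  refine derivation_eq_zero_of_mem_adjoin _ ?_ hp
  rintro _ (⟨j, rfl⟩ | ⟨j, hj, l, hl, rfl⟩)
  · exact raise_X_zero j
  · exact derivation_minor_eq_zero raise_X_zero (by simp [hj]) (by simp [hl])

lemma minorAlgebra_le_constants : (minorAlgebra R S).toSubmodule ≤ constants R S := fun _ hp =>
  mem_constants.mpr ⟨raise_eq_zero_of_mem_minorAlgebra hp,
    fun _ hi => pderivY_eq_zero_of_mem_minorAlgebra hi hp⟩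

lemma isWeightedHomogeneous_minor {i j : ι} (hi : i ∈ S) (hj : j ∈ S) :
    (minor R i j).IsWeightedHomogeneous (weight S) 0 := by
  have hX (q : ι × Fin 2) := isWeightedHomogeneous_X R (weight S) q
  refine .sub ?_ ?_
  · simpa [hi, hj] using (hX (i, 0)).mul (hX (j, 1))
  · simpa [hi, hj] using (hX (i, 1)).mul (hX (j, 0))

lemma mul_mem_leadingCoeffs (hn : n ∉ S) {c : MvPolynomial (ι × Fin 2) R}
    (hc : c ∈ generators R S) (hp : p ∈ leadingCoeffs R S n k) :
    c * p ∈ leadingCoeffs R S n k := by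
  obtain ⟨g, hg, rfl⟩ := hp
  have hc' : c ∈ minorAlgebra R (insert n S) :=
    Algebra.subset_adjoin (generators_mono (Finset.subset_insert n S) hc)
  refine ⟨c * g, Subalgebra.mul_mem _ hc' hg, pow_apply_mul_of_apply_eq_zero _ ?_ g k⟩
  exact pderivY_eq_zero_of_mem_minorAlgebra hn (Algebra.subset_adjoin hc)

lemma X_zero_mul_mem_leadingCoeffs_succ [Algebra ℚ R] {i : ι} (hi : i ∈ S) (hn : n ∉ S)
    (hp : p ∈ leadingCoeffs R S n k) (hp₀ : pderivY R n p = 0) :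
    X (i, 0) * p ∈ leadingCoeffs R S n (k + 1) := by
  obtain ⟨g, hg, rfl⟩ := hp
  have hminor : pderivY R n (minor R i n) = X (i, 0) :=
    pderivY_minor_self (ne_of_mem_of_not_mem hi hn)
  have hmem : minor R i n ∈ minorAlgebra R (insert n S) := Algebra.subset_adjoin <|
    minor_mem_generators (Finset.mem_insert_of_mem hi) (Finset.mem_insert_self n S)
  have hderiv : ((pderivY R n).toLinearMap ^ (k + 1)) (minor R i n * g) =
      (k + 1) • (X (i, 0) * ((pderivY R n).toLinearMap ^ k) g) := by
    rw [pow_succ_apply_mul_of_apply_apply_eq_zero _ (by rw [hminor]; simp), hminor, pow_succ',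
      Module.End.mul_apply, Derivation.coeFn_coe, hp₀, mul_zero, zero_add]
  have hinv : algebraMap ℚ R (k + 1)⁻¹ * (k + 1 : ℕ) = 1 := by
    rw [← map_natCast (algebraMap ℚ R), ← map_mul, Nat.cast_succ,
      inv_mul_cancel₀ (Nat.cast_add_one_ne_zero k), map_one]
  refine ⟨algebraMap ℚ R (k + 1)⁻¹ • (minor R i n * g),
    Subalgebra.smul_mem _ (Subalgebra.mul_mem _ hmem hg) _, ?_⟩
  rw [map_smul, hderiv, ← Nat.cast_smul_eq_nsmul R, smul_smul, hinv, one_smul]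

/-- Here `v` is the number of factors `x_i` with `i ∈ S`; replacing `k` of them by the minors of
columns `i` and `n` gives a preimage of `p`, up to a rational factor. -/
lemma exists_isWeightedHomogeneous_and_mem_leadingCoeffs [Algebra ℚ R] (hn : n ∉ S)
    (hp : p ∈ Submonoid.closure (generators R S)) :
    ∃ v : ℕ, p.IsWeightedHomogeneous (weight S) (v : ℤ) ∧ ∀ k ≤ v, p ∈ leadingCoeffs R S n k := by
  induction hp using Submonoid.closure_induction_left with
  | one =>
    refine ⟨0, isWeightedHomogeneous_one _ _, fun k hk => ?_⟩
    exact ⟨1, Subalgebra.one_mem _, by simp [Nat.le_zero.mp hk]⟩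
  | mul_left c hc p hp ih =>
    obtain ⟨v, hpv, hlead⟩ := ih
    have weight_zero_case (hc₀ : c.IsWeightedHomogeneous (weight S) 0) :
        ∃ v : ℕ, (c * p).IsWeightedHomogeneous (weight S) (v : ℤ) ∧
          ∀ k ≤ v, c * p ∈ leadingCoeffs R S n k :=
      ⟨v, by simpa using hc₀.mul hpv, fun k hk => mul_mem_leadingCoeffs hn hc (hlead k hk)⟩
    obtain ⟨i, rfl⟩ | ⟨i, hi, j, hj, rfl⟩ := id hc
    · have hX := isWeightedHomogeneous_X R (weight S) (i, 0)
      by_cases hi : i ∈ S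
      · refine ⟨v + 1, by simpa [hi, add_comm] using hX.mul hpv, fun k hk => ?_⟩
        obtain hk | rfl := Nat.le_succ_iff.mp hk
        · exact mul_mem_leadingCoeffs hn hc (hlead k hk)
        · have hp' : p ∈ minorAlgebra R S := 
            Submonoid.closure_le (S := (minorAlgebra R S).toSubmonoid).mpr Algebra.subset_adjoin hp
          exact X_zero_mul_mem_leadingCoeffs_succ hi hn (hlead v le_rfl)
            (pderivY_eq_zero_of_mem_minorAlgebra hn hp')
      · exact weight_zero_case (by simpa [hi] using hX)
    · exact weight_zero_case (isWeightedHomogeneous_minor hi hj)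

lemma weightedHomogeneousComponent_mem_leadingCoeffs [Algebra ℚ R] (hn : n ∉ S)
    (hp : p ∈ minorAlgebra R S) {v : ℤ} (hv : k ≤ v) :
    weightedHomogeneousComponent (weight S) v p ∈ leadingCoeffs R S n k := by
  rw [minorAlgebra, ← Subalgebra.mem_toSubmodule, Algebra.adjoin_eq_span] at hp
  induction hp using Submodule.span_induction with
  | mem m hm =>
    obtain ⟨w, hw, hlead⟩ := exists_isWeightedHomogeneous_and_mem_leadingCoeffs hn hm
    rw [weightedHomogeneousComponent_of_mem hw]
    split_ifs with h
    · exact hlead k (by lia)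
    · exact zero_mem _
  | zero => simp
  | add x y _ _ hx hy => rw [map_add]; exact add_mem hx hy
  | smul c x _ hx => rw [map_smul]; exact Submodule.smul_mem _ c hx

lemma pderivY_pow_mem_constants (hn : n ∉ S) (hp : p ∈ constants R (insert n S))
    (hk : ((pderivY R n).toLinearMap ^ (k + 1)) p = 0) :
    ((pderivY R n).toLinearMap ^ k) p ∈ constants R S := by
  obtain ⟨hraise, hpderiv⟩ := mem_constants.mp hp
  have hpn : pderivY R n (((pderivY R n).toLinearMap ^ k) p) = 0 := by
    rw [← Derivation.coeFn_coe, ← Module.End.mul_apply, ← pow_succ', hk]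
  refine mem_constants.mpr ⟨?_, fun i hi => ?_⟩
  · have hinsert : raise R (insert n S) (((pderivY R n).toLinearMap ^ k) p) = 0 := by
      have hcomm := congr($((commute_pderivY_raise R (insert n S) n).pow_left k) p)
      simpa [hraise] using hcomm.symm
    simpa [raise_insert hn, hpn] using hinsert
  · by_cases hin : i = n
    · rwa [hin]
    · have hcomm := congr($((commute_pderivY_pderivY R i n).pow_right k) p)
      simpa [hpderiv i (by simp [hin, hi])] using hcomm

lemma weightedHomogeneousComponent_pderivY_pow_eq_zero [IsAddTorsionFree R] (hn : n ∉ S)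
    (hp : raise R (insert n S) p = 0) (hk : ((pderivY R n).toLinearMap ^ (k + 1)) p = 0) {v : ℤ}
    (hv : v < k) :
    weightedHomogeneousComponent (weight S) v (((pderivY R n).toLinearMap ^ k) p) = 0 := by
  have hraise := raise_pow_apply_of_raise_insert_eq_zero hn hp
  have hcomponent := weightedHomogeneousComponent_raise_pow_eq_zero
    (by rw [hraise, hk, mul_zero]) hv
  have hX : ((-X (n, 0)) ^ k : MvPolynomial (ι × Fin 2) R).IsWeightedHomogeneous (weight S) 0 := by
    simpa [hn] using (isWeightedHomogeneous_X R (weight S) (n, 0)).neg.pow k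
  have hreg : IsRegular (-X (n, 0) : MvPolynomial (ι × Fin 2) R) := by
    simpa using isUnit_neg_one.isRegular.mul (isRegular_X (R := R) (n := (n, (0 : Fin 2))))
  rw [hraise, weightedHomogeneousComponent_mul_of_isWeightedHomogeneous_zero hX] at hcomponent
  exact (hreg.pow k).left.mul_left_eq_zero_iff.mp hcomponent

lemma pderivY_pow_mem_leadingCoeffs [Algebra ℚ R] (hn : n ∉ S)
    (hle : constants R S ≤ (minorAlgebra R S).toSubmodule) (hp : p ∈ constants R (insert n S))
    (hk : ((pderivY R n).toLinearMap ^ (k + 1)) p = 0) :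
    ((pderivY R n).toLinearMap ^ k) p ∈ leadingCoeffs R S n k := by
  have : IsAddTorsionFree R := .of_module_rat R
  rw [← sum_weightedHomogeneousComponent (weight S) (((pderivY R n).toLinearMap ^ k) p)]
  refine finsum_induction (· ∈ leadingCoeffs R S n k) (zero_mem _) (fun _ _ => add_mem) fun v => ?_
  obtain hv | hv := lt_or_ge v (k : ℤ)
  · rw [weightedHomogeneousComponent_pderivY_pow_eq_zero hn (mem_constants.mp hp).1 hk hv]
    exact zero_mem _
  · exact weightedHomogeneousComponent_mem_leadingCoeffs hn
      (hle (pderivY_pow_mem_constants hn hp hk)) hv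

lemma mem_minorAlgebra_of_pderivY_pow_eq_zero [Algebra ℚ R] (hn : n ∉ S)
    (hle : constants R S ≤ (minorAlgebra R S).toSubmodule) (hp : p ∈ constants R (insert n S))
    (hk : ((pderivY R n).toLinearMap ^ k) p = 0) : p ∈ minorAlgebra R (insert n S) := by
  induction k generalizing p with
  | zero => simp [show p = 0 from hk]
  | succ k ih =>
    obtain ⟨g, hg, hgp⟩ := pderivY_pow_mem_leadingCoeffs hn hle hp hk
    have hsub : p - g ∈ minorAlgebra R (insert n S) :=
      ih (sub_mem hp (minorAlgebra_le_constants hg)) (by rw [map_sub, hgp, sub_self])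
    simpa using add_mem hsub hg

lemma constants_empty_le_minorAlgebra [IsAddTorsionFree R] :
    constants R (∅ : Finset ι) ≤ (minorAlgebra R ∅).toSubmodule := fun p hp => by
  have hsupp : p ∈ supported R (Set.range fun i : ι => (i, (0 : Fin 2))) := by
    rw [mem_supported]
    rintro ⟨i, c⟩ hi
    fin_cases c
    · exact ⟨i, rfl⟩
    · exact absurd hi (notMem_vars_of_pderiv_eq_zero ((mem_constants.mp hp).2 i (by simp)))
  rw [supported, ← Set.range_comp] at hsupp
  exact Algebra.adjoin_mono Set.subset_union_left hsupp

theorem constants_eq_minorAlgebra [Algebra ℚ R] (S : Finset ι) :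
    constants R S = (minorAlgebra R S).toSubmodule := by
  refine le_antisymm ?_ minorAlgebra_le_constants
  induction S using Finset.induction_on with
  | empty =>
    have : IsAddTorsionFree R := .of_module_rat R
    exact constants_empty_le_minorAlgebra
  | insert n S hn ih =>
    intro p hp
    obtain ⟨N, hN⟩ := exists_pow_apply_eq_zero (pderivY_pderivY_X R n) p
    exact mem_minorAlgebra_of_pderivY_pow_eq_zero hn ih hp hN

end Constants

end Nowicki

open Nowicki in
theorem nowicki_conjecture_general {R ι : Type*} [CommRing R] [Algebra ℚ R] [LinearOrder ι]
    (δ : Derivation R (MvPolynomial (ι × Fin 2) R) (MvPolynomial (ι × Fin 2) R))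
    (hδ0 : ∀ i : ι, δ (X (i, 0)) = 0) (hδ1 : ∀ i : ι, δ (X (i, 1)) = X (i, 0))
    (f : MvPolynomial (ι × Fin 2) R) :
    δ f = 0 ↔ f ∈ Algebra.adjoin R
      ((Set.range fun i : ι => (X (i, 0) : MvPolynomial (ι × Fin 2) R)) ∪
        {p : MvPolynomial (ι × Fin 2) R |
          ∃ i j : ι, i < j ∧ p = X (i, 0) * X (j, 1) - X (i, 1) * X (j, 0)}) := by
  refine ⟨fun hf => ?_, derivation_eq_zero_of_mem_adjoin δ ?_⟩
  · let S : Finset ι := f.vars.image Prod.fst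
    have hδ : raise R S f = δ f := by
      refine derivation_eq_of_forall_mem_vars <| Prod.forall.mpr fun i c hi => ?_
      have hiS : i ∈ S := Finset.mem_image_of_mem Prod.fst hi
      fin_cases c <;> simp [hiS, hδ0, hδ1]
    have hfS : f ∈ constants R S := mem_constants.mpr ⟨hδ.trans hf, fun i hi =>
      pderiv_eq_zero_of_notMem_vars fun hif => hi (Finset.mem_image_of_mem Prod.fst hif)⟩
    rw [constants_eq_minorAlgebra] at hfS
    refine Algebra.adjoin_le ?_ hfS
    rintro _ (⟨i, rfl⟩ | ⟨i, -, j, -, rfl⟩)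
    · exact Algebra.subset_adjoin (.inl ⟨i, rfl⟩)
    · exact minor_mem_of_forall_lt_mem
        (fun i j hij => Algebra.subset_adjoin (.inr ⟨i, j, hij, rfl⟩)) i j
  · rintro _ (⟨i, rfl⟩ | ⟨i, j, -, rfl⟩)
    · exact hδ0 i
    · exact derivation_minor_eq_zero hδ0 (hδ1 i) (hδ1 j)

/-- **The Nowicki conjecture.**
The polynomial ring `K[x_1, …, x_{2d}]` is modelled as `MvPolynomial (Fin d × Fin 2) K`,
where the variable `X (i, 0)` plays the role of `x_{2i-1}` and `X (i, 1)` plays the role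
of `x_{2i}` (for `i = 1, …, d`).  If `δ` is the `K`-linear derivation determined by
`δ(x_{2i}) = x_{2i-1}` and `δ(x_{2i-1}) = 0`, then the kernel of `δ` (the algebra of
constants) is the `K`-subalgebra generated by `x_1, x_3, …, x_{2d-1}` together with the
elements `x_{2i-1} x_{2j} - x_{2i} x_{2j-1}` for `1 ≤ i < j ≤ d`. -/
theorem nowicki_conjecture (K : Type*) [Field K] [CharZero K] (d : ℕ) (hd : 1 ≤ d)
    (δ : Derivation K (MvPolynomial (Fin d × Fin 2) K) (MvPolynomial (Fin d × Fin 2) K))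
    (hδ0 : ∀ i : Fin d, δ (X (i, 0)) = 0)
    (hδ1 : ∀ i : Fin d, δ (X (i, 1)) = X (i, 0)) :
    ∀ f : MvPolynomial (Fin d × Fin 2) K,
      δ f = 0 ↔ f ∈ Algebra.adjoin K
        ((Set.range fun i : Fin d => (X (i, 0) : MvPolynomial (Fin d × Fin 2) K)) ∪
          {p : MvPolynomial (Fin d × Fin 2) K |
            ∃ i j : Fin d, i < j ∧ p = X (i, 0) * X (j, 1) - X (i, 1) * X (j, 0)}) := by
  exact nowicki_conjecture_general δ hδ0 hδ1
end

section
/- The kernel of the K-algebra homomorphism ε : P → W equals T; consequently ε induces an injective K-algebra homomorphism from the free metabelian associative algebra F = P/T into W. -/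
open MvPolynomial

namespace Stmt4

/-- Index type for `{1, …, 2d}`: the pair `(i, 0)` stands for the index `2i-1` and
`(i, 1)` for the index `2i`. -/
abbrev ι (d : ℕ) : Type := Fin d × Fin 2

/-- The free unital associative algebra `P = K⟨x_1, …, x_{2d}⟩`. -/
abbrev P (K : Type) [Field K] (d : ℕ) : Type := FreeAlgebra K (ι d)

/-- The relation whose `RingQuot` is the free metabelian associative algebra
`F = P/T`. -/
def metaRel (K : Type) [Field K] (d : ℕ) : P K d → P K d → Prop := fun p q =>
  q = 0 ∧ ∃ a b c e : P K d, p = (a * b - b * a) * (c * e - e * c)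

/-- The free metabelian associative algebra `F = P/T` of rank `2d`. -/
abbrev F (K : Type) [Field K] (d : ℕ) : Type := RingQuot (metaRel K d)

/-- The two-sided ideal `T = P'·P' ⊆ P` generated by all products of two commutators. -/
noncomputable def T (K : Type) [Field K] (d : ℕ) : TwoSidedIdeal (P K d) :=
  TwoSidedIdeal.span {p : P K d |
    ∃ a b c e : P K d, p = (a * b - b * a) * (c * e - e * c)}

/-- The polynomial ring `R = K[y_1, …, y_{2d}]`. -/
abbrev R (K : Type) [Field K] (d : ℕ) : Type := MvPolynomial (ι d) K

/-- The polynomial ring `S = K[u_1, …, u_{2d}, v'_1, …, v'_{2d}]`; the variable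
`X (Sum.inl j)` is `u_j` and `X (Sum.inr j)` is `v'_j`. -/
abbrev S (K : Type) [Field K] (d : ℕ) : Type := MvPolynomial (ι d ⊕ ι d) K

/-- The free `S`-module `M` with basis `a_1, …, a_{2d}`. -/
abbrev M (K : Type) [Field K] (d : ℕ) : Type := ι d → S K d

variable (K : Type) [Field K] (d : ℕ)

/-- The basis element `a_j` of `M`. -/
noncomputable def a (j : ι d) : M K d := Pi.single j 1

/-- `y_j ↦ u_j`. -/
noncomputable def lam : R K d →ₐ[K] S K d :=
  MvPolynomial.rename (Sum.inl : ι d → ι d ⊕ ι d)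

/-- `y_j ↦ v'_j`. -/
noncomputable def rho : R K d →ₐ[K] S K d :=
  MvPolynomial.rename (Sum.inr : ι d → ι d ⊕ ι d)

/-- The left `R`-action on `M`: `y_j` acts as scalar multiplication by `u_j`. -/
noncomputable instance : Module (R K d) (M K d) :=
  Module.compHom _ (lam K d).toRingHom

/-- The right `R`-action on `M`: `y_j` acts as scalar multiplication by `v'_j`. -/
noncomputable instance : Module (R K d)ᵐᵒᵖ (M K d) :=
  Module.compHom _ (RingHom.fromOpposite (rho K d).toRingHom fun _ _ => mul_comm _ _)

instance : SMulCommClass (R K d) (R K d)ᵐᵒᵖ (M K d) := by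
  constructor
  intro r r' m
  show lam K d r • (rho K d r'.unop • m) = rho K d r'.unop • (lam K d r • m)
  rw [smul_smul, smul_smul, mul_comm]

instance : IsScalarTower K (R K d) (M K d) := by
  constructor
  intro c r m
  show lam K d (c • r) • m = c • (lam K d r • m)
  rw [map_smul]
  exact smul_assoc c (lam K d r) m

instance : IsScalarTower K (R K d)ᵐᵒᵖ (M K d) := by
  constructor
  intro c r m
  show rho K d (c • r).unop • m = c • (rho K d r.unop • m)
  rw [MulOpposite.unop_smul, map_smul]
  exact smul_assoc c (rho K d r.unop) m

/-- The wreath product `W = R ⋉ M`, the trivial square-zero extension of `R` by the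
`R`-bimodule `M`. -/
noncomputable abbrev W : Type := TrivSqZeroExt (R K d) (M K d)

/-- The unique `K`-algebra homomorphism `ε : P → W` with `ε(x_j) = (y_j, a_j)`. -/
noncomputable def ε : P K d →ₐ[K] W K d :=
  FreeAlgebra.lift K fun j =>
    TrivSqZeroExt.inl (MvPolynomial.X j) + TrivSqZeroExt.inr (a K d j)

/-!
Let `π : P → R` be the abelianization map, with kernel `I`. Then `I` is the commutator ideal, and
`I² = T` because the identity `z[c, e] = [zc, e] - [z, e]c` moves a factor between two commutators
into the second one.

The first component of `ε` is `π` and the second is a derivation `D`, so `ε` kills `I²`. For the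
converse, choose a linear section `σ` of `π`. Since `M` is the free bimodule on the `a_j`, there is
a linear map `Θ` on `M` with `Θ(f a_j g) = (σ(f) x_j - σ(f y_j)) σ(g)`, and induction on `p` gives
`Θ(f D(p) g) ≡ (σ(f) p - σ(f π(p))) σ(g)` modulo `I²`. If `ε(p) = 0`, taking `f = g = 1` shows
`σ(1) p σ(1) ∈ I²`, hence `p ∈ I²`, because `p` and `1 - σ(1)` lie in `I`. This argument works for
every algebra `R = P/I` that is projective over the base ring.
-/

open MulOpposite (op)
open scoped Pointwise TensorProduct

section IdealSquare

variable {A : Type*} [Ring A]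

/-- The square `I²` of a two-sided ideal: the ideal generated by products of two elements of `I`. -/
def idealSq (I : TwoSidedIdeal A) : TwoSidedIdeal A :=
  TwoSidedIdeal.span ((I : Set A) * (I : Set A))

lemma mul_mem_idealSq {I : TwoSidedIdeal A} {x y : A} (hx : x ∈ I) (hy : y ∈ I) :
    x * y ∈ idealSq I :=
  TwoSidedIdeal.subset_span (Set.mul_mem_mul hx hy)

lemma idealSq_le {I J : TwoSidedIdeal A} : idealSq I ≤ J ↔ ∀ x ∈ I, ∀ y ∈ I, x * y ∈ J :=
  TwoSidedIdeal.span_le.trans Set.mul_subset_iff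

lemma mul_mem_of_mem_span {s t : Set A} {J : TwoSidedIdeal A}
    (h : ∀ x ∈ s, ∀ z, ∀ y ∈ t, x * z * y ∈ J) {p q : A}
    (hp : p ∈ TwoSidedIdeal.span s) (hq : q ∈ TwoSidedIdeal.span t) : p * q ∈ J := by
  have mul_mul_mem_of_mem_left : ∀ x ∈ s, ∀ z, x * z * q ∈ J := by
    intro x hx
    induction hq using TwoSidedIdeal.span_induction with
    | mem y hy => exact fun z => h x hx z y hy
    | zero => simp [J.zero_mem]
    | add y y' _ _ ihy ihy' => exact fun z => by simpa [mul_add] using J.add_mem (ihy z) (ihy' z)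
    | neg y _ ihy => exact fun z => by simpa using J.neg_mem (ihy z)
    | left_absorb b y _ ihy => exact fun z => by simpa [mul_assoc] using ihy (z * b)
    | right_absorb b y _ ihy =>
      exact fun z => by simpa [mul_assoc] using J.mul_mem_right _ b (ihy z)
  suffices ∀ z, p * z * q ∈ J by simpa using this 1
  induction hp using TwoSidedIdeal.span_induction with
  | mem x hx => exact mul_mul_mem_of_mem_left x hx
  | zero => simp [J.zero_mem]
  | add x x' _ _ ihx ihx' => exact fun z => by simpa [add_mul] using J.add_mem (ihx z) (ihx' z)
  | neg x _ ihx => exact fun z => by simpa using J.neg_mem (ihx z)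
  | left_absorb b x _ ihx =>
    exact fun z => by simpa [mul_assoc] using J.mul_mem_left b _ (ihx z)
  | right_absorb b x _ ihx => exact fun z => by simpa [mul_assoc] using ihx (b * z)

end IdealSquare

section CommutatorIdeal

variable (A : Type*) [Ring A]

/-- The commutator ideal of `A`, whose quotient is the largest commutative quotient of `A`. -/
def commutatorIdeal : TwoSidedIdeal A :=
  TwoSidedIdeal.span {p : A | ∃ a b : A, p = a * b - b * a}

/-- The products `[a, b][c, e]` of two commutators, the defining identities of metabelian
associative algebras. -/
def commutatorProducts : Set A :=
  {p : A | ∃ a b c e : A, p = (a * b - b * a) * (c * e - e * c)}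

variable {A}

lemma commutator_mem_commutatorIdeal (a b : A) : a * b - b * a ∈ commutatorIdeal A :=
  TwoSidedIdeal.subset_span ⟨a, b, rfl⟩

lemma commutator_mul_mul_commutator_mem_span (a b z c e : A) :
    (a * b - b * a) * z * (c * e - e * c) ∈ TwoSidedIdeal.span (commutatorProducts A) := by
  have product_mem (c e : A) :
      (a * b - b * a) * (c * e - e * c) ∈ TwoSidedIdeal.span (commutatorProducts A) :=
    TwoSidedIdeal.subset_span ⟨a, b, c, e, rfl⟩
  have move_middle : (a * b - b * a) * z * (c * e - e * c) =
      (a * b - b * a) * (z * c * e - e * (z * c)) -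
        (a * b - b * a) * (z * e - e * z) * c := by
    noncomm_ring
  rw [move_middle]
  exact TwoSidedIdeal.sub_mem _ (product_mem (z * c) e)
    (TwoSidedIdeal.mul_mem_right _ _ _ (product_mem z e))

variable (A) in
lemma idealSq_commutatorIdeal :
    idealSq (commutatorIdeal A) = TwoSidedIdeal.span (commutatorProducts A) := by
  apply le_antisymm
  · refine idealSq_le.2 fun x hx y hy => mul_mem_of_mem_span ?_ hx hy
    rintro _ ⟨a, b, rfl⟩ z _ ⟨c, e, rfl⟩
    exact commutator_mul_mul_commutator_mem_span a b z c e
  · refine TwoSidedIdeal.span_le.2 ?_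
    rintro _ ⟨a, b, c, e, rfl⟩
    exact mul_mem_idealSq (commutator_mem_commutatorIdeal a b) (commutator_mem_commutatorIdeal c e)

instance : CommRing (commutatorIdeal A).ringCon.Quotient where
  mul_comm := by
    rintro ⟨x⟩ ⟨y⟩
    exact Quotient.sound (((commutatorIdeal A).rel_iff _ _).2 (commutator_mem_commutatorIdeal x y))

end CommutatorIdeal

lemma mkₐ_eq_zero_iff_mem (k : Type*) {A : Type*} [CommRing k] [Ring A] [Algebra k A]
    {I : TwoSidedIdeal A} {p : A} : I.ringCon.mkₐ k p = 0 ↔ p ∈ I :=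
  RingCon.eq I.ringCon

lemma ker_lift_X_eq_commutatorIdeal (k α : Type*) [CommRing k] :
    TwoSidedIdeal.ker (FreeAlgebra.lift k (X : α → MvPolynomial α k)) =
      commutatorIdeal (FreeAlgebra k α) := by
  apply le_antisymm
  · set mk := (commutatorIdeal (FreeAlgebra k α)).ringCon.mkₐ k with mk_def
    have mk_factors_through_lift : (aeval fun j => mk (FreeAlgebra.ι k j)).comp
        (FreeAlgebra.lift k (X : α → MvPolynomial α k)) = mk := by
      ext j
      simp
    intro p hp
    rw [TwoSidedIdeal.mem_ker] at hp
    rw [← mkₐ_eq_zero_iff_mem k, ← mk_def, ← mk_factors_through_lift, AlgHom.comp_apply, hp,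
      map_zero]
  · refine TwoSidedIdeal.span_le.2 ?_
    rintro _ ⟨a, b, rfl⟩
    simp [TwoSidedIdeal.mem_ker, mul_comm]

lemma lift_X_surjective (k α : Type*) [CommRing k] :
    Function.Surjective (FreeAlgebra.lift k (X : α → MvPolynomial α k)) := by
  rw [← AlgHom.range_eq_top, eq_top_iff, ← adjoin_range_X, Algebra.adjoin_le_iff]
  rintro _ ⟨j, rfl⟩
  exact ⟨FreeAlgebra.ι k j, FreeAlgebra.lift_ι_apply _ _⟩

section RingQuot

variable {k A B : Type*} [CommRing k] [Ring A] [Algebra k A] [Ring B] [Algebra k B]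

/-- The relation setting every element of `s` to zero, so that `RingQuot (vanishingRel s)` is the
quotient of `A` by the two-sided ideal generated by `s`. -/
def vanishingRel (s : Set A) : A → A → Prop := fun p q => q = 0 ∧ p ∈ s

lemma exists_injective_lift_of_ker_eq_span {s : Set A} {f : A →ₐ[k] B}
    (hf : TwoSidedIdeal.ker f = TwoSidedIdeal.span s) :
    ∃ f' : RingQuot (vanishingRel s) →ₐ[k] B,
      Function.Injective f' ∧ f'.comp (RingQuot.mkAlgHom k (vanishingRel s)) = f := by
  have respects : ∀ ⦃p q⦄, vanishingRel s p q → f p = f q := by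
    rintro p _ ⟨rfl, hp⟩
    rw [map_zero, ← TwoSidedIdeal.mem_ker, hf]
    exact TwoSidedIdeal.subset_span hp
  have ker_le : TwoSidedIdeal.ker f ≤
      TwoSidedIdeal.ker (RingQuot.mkAlgHom k (vanishingRel s)) := by
    rw [hf, TwoSidedIdeal.span_le]
    intro p hp
    rw [SetLike.mem_coe, TwoSidedIdeal.mem_ker,
      RingQuot.mkAlgHom_rel k (show vanishingRel s p 0 from ⟨rfl, hp⟩), map_zero]
  refine ⟨RingQuot.liftAlgHom k ⟨f, respects⟩, ?_, ?_⟩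
  · refine (injective_iff_map_eq_zero _).2 fun z hz => ?_
    obtain ⟨p, rfl⟩ := RingQuot.mkAlgHom_surjective k _ z
    rw [RingQuot.liftAlgHom_mkAlgHom_apply] at hz
    exact (TwoSidedIdeal.mem_ker _).1 (ker_le ((TwoSidedIdeal.mem_ker _).2 hz))
  · exact AlgHom.ext fun p => RingQuot.liftAlgHom_mkAlgHom_apply k _ _ p

end RingQuot

section Magnus

variable {k α A N Q : Type*} [CommRing k] [Ring A] [Algebra k A]
  [AddCommGroup N] [Module k N] [Module A N] [Module Aᵐᵒᵖ N]
  [AddCommGroup Q] [Module k Q]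

variable (k A) in
/-- The family `n` is a basis of `N` as a free `A`-bimodule over `k`: the bimodule map from
`⨁ⱼ A ⊗ A` that sends `1 ⊗ 1` in the `j`-th summand to `n j` is an isomorphism. -/
def IsBimoduleBasis (n : α → N) : Prop :=
  ∃ e : (α →₀ A ⊗[k] A) ≃ₗ[k] N,
    ∀ j f g, e (Finsupp.single j (f ⊗ₜ[k] g)) = f • op g • n j

lemma IsBimoduleBasis.exists_linearMap {n : α → N} (hn : IsBimoduleBasis k A n)
    (B : α → A →ₗ[k] A →ₗ[k] Q) :
    ∃ Θ : N →ₗ[k] Q, ∀ j f g, Θ (f • op g • n j) = B j f g := by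
  obtain ⟨e, he⟩ := hn
  exact ⟨Finsupp.lsum k (fun j => TensorProduct.lift (B j)) ∘ₗ e.symm, by simp [← he]⟩

variable [SMulCommClass A Aᵐᵒᵖ N] [IsScalarTower k A N] [IsScalarTower k Aᵐᵒᵖ N]

variable (k) in
/-- The Magnus homomorphism `xⱼ ↦ (x j, n j)` from the free algebra to the square-zero extension
`A ⋉ N`. Its second component is the derivation of the free algebra sending `xⱼ` to `n j`. -/
def magnusHom (x : α → A) (n : α → N) : FreeAlgebra k α →ₐ[k] TrivSqZeroExt A N :=
  FreeAlgebra.lift k fun j => TrivSqZeroExt.inl (x j) + TrivSqZeroExt.inr (n j)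

variable {x : α → A} {n : α → N}

lemma fst_magnusHom (p : FreeAlgebra k α) :
    (magnusHom k x n p).fst = FreeAlgebra.lift k x p := by
  have : (TrivSqZeroExt.fstHom k A N).comp (magnusHom k x n) = FreeAlgebra.lift k x := by
    ext j
    simp [magnusHom]
  exact DFunLike.congr_fun this p

lemma snd_magnusHom_mul (p q : FreeAlgebra k α) :
    (magnusHom k x n (p * q)).snd =
      FreeAlgebra.lift k x p • (magnusHom k x n q).snd +
        op (FreeAlgebra.lift k x q) • (magnusHom k x n p).snd := by
  rw [map_mul, TrivSqZeroExt.snd_mul, fst_magnusHom, fst_magnusHom]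

lemma idealSq_ker_lift_le_ker_magnusHom :
    idealSq (TwoSidedIdeal.ker (FreeAlgebra.lift k x)) ≤
      TwoSidedIdeal.ker (magnusHom k x n) := by
  refine idealSq_le.2 fun u hu v hv => ?_
  rw [TwoSidedIdeal.mem_ker] at hu hv ⊢
  ext
  · simp [fst_magnusHom, hu]
  · rw [snd_magnusHom_mul, hu, hv]
    simp

lemma smul_op_smul_snd_magnusHom_mul (f g : A) (u v : FreeAlgebra k α) :
    f • op g • (magnusHom k x n (u * v)).snd =
      (f * FreeAlgebra.lift k x u) • op g • (magnusHom k x n v).snd +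
        f • op (FreeAlgebra.lift k x v * g) • (magnusHom k x n u).snd := by
  rw [snd_magnusHom_mul, smul_add, smul_add, ← smul_comm _ (op g), smul_smul, smul_smul,
    MulOpposite.op_mul]

lemma map_smul_snd_magnusHom {σ : A →ₗ[k] FreeAlgebra k α}
    (hσ : ∀ f, FreeAlgebra.lift k x (σ f) = f) {q : FreeAlgebra k α →ₗ[k] Q}
    (hq : ∀ u v, FreeAlgebra.lift k x u = 0 → FreeAlgebra.lift k x v = 0 → q (u * v) = 0)
    {Θ : N →ₗ[k] Q}
    (hΘ : ∀ j f g, Θ (f • op g • n j) =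
      q ((σ f * FreeAlgebra.ι k j - σ (f * x j)) * σ g))
    (p : FreeAlgebra k α) (f g : A) :
    Θ (f • op g • (magnusHom k x n p).snd) =
      q ((σ f * p - σ (f * FreeAlgebra.lift k x p)) * σ g) := by
  induction p using FreeAlgebra.induction generalizing f g with
  | grade0 c => simp [Algebra.algebraMap_eq_smul_one]
  | grade1 j => simp [magnusHom, hΘ]
  | add u v hu hv =>
    rw [map_add, TrivSqZeroExt.snd_add, smul_add, smul_add, map_add, hu, hv, ← map_add,
      map_add (FreeAlgebra.lift k x), mul_add f, map_add σ]
    congr 1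
    noncomm_ring
  | mul u v hu hv =>
    have defect_mul_defect : q ((σ f * u - σ (f * FreeAlgebra.lift k x u)) *
        (v * σ g - σ (FreeAlgebra.lift k x v * g))) = 0 :=
      hq _ _ (by simp [hσ]) (by simp [hσ])
    rw [smul_op_smul_snd_magnusHom_mul, map_add, hu, hv, ← add_zero (q _ + q _),
      ← defect_mul_defect, ← map_add, ← map_add, map_mul (FreeAlgebra.lift k x),
      ← mul_assoc f]
    congr 1
    noncomm_ring

lemma map_eq_zero_of_magnusHom_eq_zero [Module.Projective k A]
    (hx : Function.Surjective (FreeAlgebra.lift k x)) (hn : IsBimoduleBasis k A n)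
    {q : FreeAlgebra k α →ₗ[k] Q}
    (hq : ∀ u v, FreeAlgebra.lift k x u = 0 → FreeAlgebra.lift k x v = 0 → q (u * v) = 0)
    {p : FreeAlgebra k α} (hp : magnusHom k x n p = 0) : q p = 0 := by
  obtain ⟨σ, hσ⟩ := Module.projective_lifting_property
    (FreeAlgebra.lift k x).toLinearMap LinearMap.id hx
  replace hσ (f : A) : FreeAlgebra.lift k x (σ f) = f := LinearMap.congr_fun hσ f
  obtain ⟨Θ, hΘ⟩ := hn.exists_linearMap fun j =>
    ((LinearMap.mul k (FreeAlgebra k α)).compl₁₂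
      (LinearMap.mulRight k (FreeAlgebra.ι k j) ∘ₗ σ - σ ∘ₗ LinearMap.mulRight k (x j)) σ).compr₂ q
  have lift_p : FreeAlgebra.lift k x p = 0 := by
    rw [← fst_magnusHom (n := n), hp, TrivSqZeroExt.fst_zero]
  have lift_one_sub : FreeAlgebra.lift k x (1 - σ 1) = 0 := by simp [hσ]
  have sandwich : q (σ 1 * p * σ 1) = 0 := by
    simpa [hp, lift_p] using (map_smul_snd_magnusHom hσ hq hΘ p 1 1).symm
  calc q p = q ((1 - σ 1) * p) + q (σ 1 * p * (1 - σ 1)) + q (σ 1 * p * σ 1) := by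
        rw [← map_add, ← map_add]
        congr 1
        noncomm_ring
    _ = 0 := by
        rw [hq _ _ lift_one_sub lift_p, hq _ _ (by simp [lift_p]) lift_one_sub, sandwich]
        simp

theorem ker_magnusHom [Module.Projective k A] (hx : Function.Surjective (FreeAlgebra.lift k x))
    (hn : IsBimoduleBasis k A n) :
    TwoSidedIdeal.ker (magnusHom k x n) =
      idealSq (TwoSidedIdeal.ker (FreeAlgebra.lift k x)) := by
  refine le_antisymm (fun p hp => ?_) idealSq_ker_lift_le_ker_magnusHom
  rw [TwoSidedIdeal.mem_ker] at hp
  refine (mkₐ_eq_zero_iff_mem k).1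
    (map_eq_zero_of_magnusHom_eq_zero (q := (RingCon.mkₐ k _).toLinearMap) hx hn
      (fun u v hu hv => (mkₐ_eq_zero_iff_mem k).2 ?_) hp)
  exact mul_mem_idealSq ((TwoSidedIdeal.mem_ker _).2 hu) ((TwoSidedIdeal.mem_ker _).2 hv)

end Magnus

lemma tensorEquivSum_tmul {k σ τ : Type*} [CommRing k] (f : MvPolynomial σ k)
    (g : MvPolynomial τ k) :
    tensorEquivSum k σ τ k (f ⊗ₜ[k] g) = rename Sum.inl f * rename Sum.inr g := by
  have left : (tensorEquivSum k σ τ k).toAlgHom.comp Algebra.TensorProduct.includeLeft =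
      rename Sum.inl := by
    ext j
    simp
  have right : (tensorEquivSum k σ τ k).toAlgHom.comp Algebra.TensorProduct.includeRight =
      rename Sum.inr := by
    ext j
    simp
  rw [← left, ← right, ← one_mul g, ← mul_one f, ← Algebra.TensorProduct.tmul_mul_tmul, map_mul]
  simp

lemma isBimoduleBasis_a : IsBimoduleBasis K (R K d) (a K d) := by
  refine ⟨(Finsupp.mapRange.linearEquiv (tensorEquivSum K (ι d) (ι d) K).toLinearEquiv).trans
    (Finsupp.linearEquivFunOnFinite K (S K d) (ι d)), fun j f g => ?_⟩
  change _ = lam K d f • rho K d g • a K d j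
  simp [tensorEquivSum_tmul, a, lam, rho, ← Pi.single_smul, -Finsupp.single_mul]

theorem stmt4_general {k α N : Type*} [CommRing k] [AddCommGroup N] [Module k N]
    [Module (MvPolynomial α k) N] [Module (MvPolynomial α k)ᵐᵒᵖ N]
    [SMulCommClass (MvPolynomial α k) (MvPolynomial α k)ᵐᵒᵖ N]
    [IsScalarTower k (MvPolynomial α k) N] [IsScalarTower k (MvPolynomial α k)ᵐᵒᵖ N]
    {n : α → N} (hn : IsBimoduleBasis k (MvPolynomial α k) n) :
    (∀ p : FreeAlgebra k α,
        magnusHom k (X : α → MvPolynomial α k) n p = 0 ↔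
          p ∈ TwoSidedIdeal.span (commutatorProducts (FreeAlgebra k α))) ∧
      ∃ ε' : RingQuot (vanishingRel (commutatorProducts (FreeAlgebra k α))) →ₐ[k]
          TrivSqZeroExt (MvPolynomial α k) N,
        Function.Injective ε' ∧
          ε'.comp (RingQuot.mkAlgHom k (vanishingRel (commutatorProducts (FreeAlgebra k α)))) =
            magnusHom k (X : α → MvPolynomial α k) n := by
  have ker_eq : TwoSidedIdeal.ker (magnusHom k (X : α → MvPolynomial α k) n) =
      TwoSidedIdeal.span (commutatorProducts (FreeAlgebra k α)) := by
    rw [ker_magnusHom (lift_X_surjective k α) hn, ker_lift_X_eq_commutatorIdeal,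
      idealSq_commutatorIdeal]
  exact ⟨fun p => by rw [← ker_eq, TwoSidedIdeal.mem_ker],
    exists_injective_lift_of_ker_eq_span ker_eq⟩

/-- The kernel of `ε : P → W` is exactly `T`; consequently `ε` induces an injective
`K`-algebra homomorphism `F = P/T → W`. -/
theorem stmt4 [CharZero K] (hd : 1 ≤ d) :
    (∀ p : P K d, ε K d p = 0 ↔ p ∈ T K d) ∧
      ∃ ε' : F K d →ₐ[K] W K d,
        Function.Injective ε' ∧
          ε'.comp (RingQuot.mkAlgHom K (metaRel K d)) = ε K d := by
  exact stmt4_general (isBimoduleBasis_a K d)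

end Stmt4
end

section
/- For all m, n ≥ 0 and all indices i_1,…,i_m, i, j, j_1,…,j_n ∈ {1,…,2d}, the following equality holds in W: ε(x_{i_1}⋯x_{i_m} [x_i, x_j, x_{j_1},…,x_{j_n}]) = (0, (v_j·a_i − v_i·a_j)·v_{j_1}⋯v_{j_n}·u_{i_1}⋯u_{i_m}), where the dot denotes scalar multiplication in the S-module M. -/
open MvPolynomial

namespace Stmt5

/-- Index type for `{1, …, 2d}`: the pair `(i, 0)` stands for the index `2i-1` and
`(i, 1)` for the index `2i`. -/
abbrev ι (d : ℕ) : Type := Fin d × Fin 2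

/-- The free unital associative algebra `P = K⟨x_1, …, x_{2d}⟩`. -/
abbrev P (K : Type) [Field K] (d : ℕ) : Type := FreeAlgebra K (ι d)

/-- The relation whose `RingQuot` is the free metabelian associative algebra
`F = P/T`. -/
def metaRel (K : Type) [Field K] (d : ℕ) : P K d → P K d → Prop := fun p q =>
  q = 0 ∧ ∃ a b c e : P K d, p = (a * b - b * a) * (c * e - e * c)

/-- The free metabelian associative algebra `F = P/T` of rank `2d`. -/
abbrev F (K : Type) [Field K] (d : ℕ) : Type := RingQuot (metaRel K d)

/-- The two-sided ideal `T = P'·P' ⊆ P` generated by all products of two commutators. -/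
noncomputable def T (K : Type) [Field K] (d : ℕ) : TwoSidedIdeal (P K d) :=
  TwoSidedIdeal.span {p : P K d |
    ∃ a b c e : P K d, p = (a * b - b * a) * (c * e - e * c)}

/-- The polynomial ring `R = K[y_1, …, y_{2d}]`. -/
abbrev R (K : Type) [Field K] (d : ℕ) : Type := MvPolynomial (ι d) K

/-- The polynomial ring `S = K[u_1, …, u_{2d}, v'_1, …, v'_{2d}]`; the variable
`X (Sum.inl j)` is `u_j` and `X (Sum.inr j)` is `v'_j`. -/
abbrev S (K : Type) [Field K] (d : ℕ) : Type := MvPolynomial (ι d ⊕ ι d) K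

/-- The free `S`-module `M` with basis `a_1, …, a_{2d}`. -/
abbrev M (K : Type) [Field K] (d : ℕ) : Type := ι d → S K d

variable (K : Type) [Field K] (d : ℕ)

/-- The basis element `a_j` of `M`. -/
noncomputable def a (j : ι d) : M K d := Pi.single j 1

/-- `y_j ↦ u_j`. -/
noncomputable def lam : R K d →ₐ[K] S K d :=
  MvPolynomial.rename (Sum.inl : ι d → ι d ⊕ ι d)

/-- `y_j ↦ v'_j`. -/
noncomputable def rho : R K d →ₐ[K] S K d :=
  MvPolynomial.rename (Sum.inr : ι d → ι d ⊕ ι d)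

/-- The left `R`-action on `M`: `y_j` acts as scalar multiplication by `u_j`. -/
noncomputable instance : Module (R K d) (M K d) :=
  Module.compHom _ (lam K d).toRingHom

/-- The right `R`-action on `M`: `y_j` acts as scalar multiplication by `v'_j`. -/
noncomputable instance : Module (R K d)ᵐᵒᵖ (M K d) :=
  Module.compHom _ (RingHom.fromOpposite (rho K d).toRingHom fun _ _ => mul_comm _ _)

instance : SMulCommClass (R K d) (R K d)ᵐᵒᵖ (M K d) := by
  constructor
  intro r r' m
  show lam K d r • (rho K d r'.unop • m) = rho K d r'.unop • (lam K d r • m)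
  rw [smul_smul, smul_smul, mul_comm]

instance : IsScalarTower K (R K d) (M K d) := by
  constructor
  intro c r m
  show lam K d (c • r) • m = c • (lam K d r • m)
  rw [map_smul]
  exact smul_assoc c (lam K d r) m

instance : IsScalarTower K (R K d)ᵐᵒᵖ (M K d) := by
  constructor
  intro c r m
  show rho K d (c • r).unop • m = c • (rho K d r.unop • m)
  rw [MulOpposite.unop_smul, map_smul]
  exact smul_assoc c (rho K d r.unop) m

/-- The wreath product `W = R ⋉ M`, the trivial square-zero extension of `R` by the
`R`-bimodule `M`. -/
noncomputable abbrev W : Type := TrivSqZeroExt (R K d) (M K d)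

/-- The unique `K`-algebra homomorphism `ε : P → W` with `ε(x_j) = (y_j, a_j)`. -/
noncomputable def ε : P K d →ₐ[K] W K d :=
  FreeAlgebra.lift K fun j =>
    TrivSqZeroExt.inl (MvPolynomial.X j) + TrivSqZeroExt.inr (a K d j)

/-- `u_j ∈ S`. -/
noncomputable def u (j : ι d) : S K d := X (Sum.inl j)

/-- `v_j = v'_j - u_j ∈ S`. -/
noncomputable def v (j : ι d) : S K d := X (Sum.inr j) - X (Sum.inl j)

/-- The left-normed commutator `[f, g, z_1, …, z_n]`, with `[f,g] = fg - gf` and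
`[f,g,h] = [[f,g],h]`. -/
def lnc {A : Type} [Ring A] (f g : A) (l : List A) : A :=
  l.foldl (fun acc z => acc * z - z * acc) (f * g - g * f)

/-! In `W` an element of `M` only sees the `R`-component of what it is multiplied by: `z = (r, m)`
acts on it from the left by `lam r`, from the right by `rho r`, and hence by commutation as
`rho r - lam r`, which is `v_j` for `z = ε(x_j)`. Since `R` is commutative, the innermost commutator
already lies in `M`, so each further bracket, and then each left factor, is such a scalar. -/

open MulOpposite TrivSqZeroExt

section SquareZeroExtension

variable {A N : Type*}

theorem mul_inr_eq_inr_fst_smul [Semiring A] [AddCommMonoid N] [Module A N]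
    [Module Aᵐᵒᵖ N] (x : TrivSqZeroExt A N) (n : N) : x * inr n = inr (x.fst • n) := by
  ext <;> simp

theorem inr_mul_eq_inr_op_fst_smul [Semiring A] [AddCommMonoid N] [Module A N]
    [Module Aᵐᵒᵖ N] (n : N) (x : TrivSqZeroExt A N) : inr n * x = inr (op x.fst • n) := by
  ext <;> simp

theorem mul_sub_mul_eq_inr [CommRing A] [AddCommGroup N] [Module A N] [Module Aᵐᵒᵖ N]
    (x y : TrivSqZeroExt A N) :
    x * y - y * x =
      inr ((op y.fst • x.snd - y.fst • x.snd) - (op x.fst • y.snd - x.fst • y.snd)) := by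
  ext
  · simp [mul_comm]
  · simp only [snd_sub, snd_mul, snd_inr]
    abel

end SquareZeroExtension

theorem map_lnc {A B : Type} [Ring A] [Ring B] (φ : A →+* B) (f g : A) (l : List A) :
    φ (lnc f g l) = lnc (φ f) (φ g) (l.map φ) := by
  rw [lnc, lnc, List.foldl_map, ← map_mul, ← map_mul, ← map_sub]
  exact (List.foldl_hom φ fun _ _ => by simp only [map_sub, map_mul]).symm

section WreathProduct

variable {K d}

theorem smul_eq_lam_smul (r : R K d) (m : M K d) : r • m = lam K d r • m := rfl

theorem op_smul_eq_rho_smul (r : R K d) (m : M K d) : op r • m = rho K d r • m := rfl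

/-- The difference of the right and the left action of `r ∈ R` on `M`, as a scalar in `S`.
It sends `y_j` to `v_j`, and `[m, z] = rhoSubLam r • m` in `W` for `m ∈ M` and `z ∈ W` with
`R`-component `r`. -/
noncomputable def rhoSubLam (r : R K d) : S K d := rho K d r - lam K d r

theorem lam_X (j : ι d) : lam K d (X j) = u K d j := rename_X _ _

theorem rhoSubLam_X (j : ι d) : rhoSubLam (X j) = v K d j := by
  rw [rhoSubLam, rho, lam, rename_X, rename_X, v]

theorem op_smul_sub_smul (r : R K d) (m : M K d) : op r • m - r • m = rhoSubLam r • m := by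
  rw [op_smul_eq_rho_smul, smul_eq_lam_smul, rhoSubLam, sub_smul]

theorem inr_mul_sub_mul_inr (m : M K d) (z : W K d) :
    inr m * z - z * inr m = inr (rhoSubLam z.fst • m) := by
  rw [inr_mul_eq_inr_op_fst_smul, mul_inr_eq_inr_fst_smul, ← inr_sub, op_smul_sub_smul]

theorem foldl_commutator_inr (l : List (W K d)) (m : M K d) :
    l.foldl (fun acc z => acc * z - z * acc) (inr m) =
      inr ((l.map fun z => rhoSubLam z.fst).prod • m) := by
  induction l generalizing m with
  | nil => simp
  | cons z l ih =>
    rw [List.foldl_cons, inr_mul_sub_mul_inr, ih, smul_smul, List.map_cons, List.prod_cons,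
      mul_comm]

theorem lnc_eq_inr (x y : W K d) (l : List (W K d)) :
    lnc x y l =
      inr ((l.map fun z => rhoSubLam z.fst).prod •
        (rhoSubLam y.fst • x.snd - rhoSubLam x.fst • y.snd)) := by
  rw [lnc, mul_sub_mul_eq_inr, op_smul_sub_smul, op_smul_sub_smul, foldl_commutator_inr]

theorem fst_ε_ι (j : ι d) : (ε K d (FreeAlgebra.ι K j)).fst = X j := by
  simp [ε]

theorem snd_ε_ι (j : ι d) : (ε K d (FreeAlgebra.ι K j)).snd = a K d j := by
  simp [ε]

theorem ε_lnc_ι (i j : ι d) {n : ℕ} (J : Fin n → ι d) :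
    ε K d (lnc (FreeAlgebra.ι K i) (FreeAlgebra.ι K j)
        (List.ofFn fun k => FreeAlgebra.ι K (J k))) =
      inr ((∏ k, v K d (J k)) • (v K d j • a K d i - v K d i • a K d j)) := by
  have h := map_lnc (ε K d : P K d →+* W K d) (FreeAlgebra.ι K i) (FreeAlgebra.ι K j)
    (List.ofFn fun k => FreeAlgebra.ι K (J k))
  simpa only [RingHom.coe_coe, lnc_eq_inr, List.map_ofFn, List.prod_ofFn, Function.comp_apply,
    fst_ε_ι, snd_ε_ι, rhoSubLam_X] using h

theorem lam_fst_ε_prod_ι {m : ℕ} (I : Fin m → ι d) :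
    lam K d (ε K d (List.ofFn fun k => FreeAlgebra.ι K (I k)).prod).fst = ∏ k, u K d (I k) := by
  simp only [map_list_prod, fst_list_prod, List.map_ofFn, List.prod_ofFn, Function.comp_apply,
    fst_ε_ι, map_prod, lam_X]

theorem stmt5_general {m n : ℕ} (I : Fin m → ι d) (i j : ι d) (J : Fin n → ι d) :
    ε K d ((List.ofFn fun k => FreeAlgebra.ι K (I k)).prod *
        lnc (FreeAlgebra.ι K i) (FreeAlgebra.ι K j)
          (List.ofFn fun k => (FreeAlgebra.ι K (J k) : P K d))) =
      inr (((∏ k : Fin n, v K d (J k)) * ∏ k : Fin m, u K d (I k)) •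
          (v K d j • a K d i - v K d i • a K d j)) := by
  rw [map_mul, ε_lnc_ι, mul_inr_eq_inr_fst_smul, smul_eq_lam_smul, lam_fst_ε_prod_ι, smul_smul,
    mul_comm]

end WreathProduct

/-- `ε(x_{i_1} ⋯ x_{i_m} [x_i, x_j, x_{j_1}, …, x_{j_n}])
  = (0, (v_j·a_i - v_i·a_j)·v_{j_1} ⋯ v_{j_n}·u_{i_1} ⋯ u_{i_m})`. -/
theorem stmt5 [CharZero K] (hd : 1 ≤ d) (m n : ℕ)
    (I : Fin m → ι d) (i j : ι d) (J : Fin n → ι d) :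
    ε K d ((List.ofFn fun k => FreeAlgebra.ι K (I k)).prod *
        lnc (FreeAlgebra.ι K i) (FreeAlgebra.ι K j)
          (List.ofFn fun k => (FreeAlgebra.ι K (J k) : P K d))) =
      TrivSqZeroExt.inr
        (((∏ k : Fin n, v K d (J k)) * ∏ k : Fin m, u K d (I k)) •
          (v K d j • a K d i - v K d i • a K d j)) := by
  exact stmt5_general I i j J

end Stmt5
end

section
/- Let f_1,…,f_{2d} ∈ S. The element (0, f_1·a_1 + ⋯ + f_{2d}·a_{2d}) of W belongs to the image ε(P′) of the commutator ideal P′ of P if and only if v_1 f_1 + ⋯ + v_{2d} f_{2d} = 0 in S. -/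
open MvPolynomial

namespace Stmt6

/-- Index type for `{1, …, 2d}`: the pair `(i, 0)` stands for the index `2i-1` and
`(i, 1)` for the index `2i`. -/
abbrev ι (d : ℕ) : Type := Fin d × Fin 2

/-- The free unital associative algebra `P = K⟨x_1, …, x_{2d}⟩`. -/
abbrev P (K : Type) [Field K] (d : ℕ) : Type := FreeAlgebra K (ι d)

/-- The relation whose `RingQuot` is the free metabelian associative algebra
`F = P/T`. -/
def metaRel (K : Type) [Field K] (d : ℕ) : P K d → P K d → Prop := fun p q =>
  q = 0 ∧ ∃ a b c e : P K d, p = (a * b - b * a) * (c * e - e * c)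

/-- The free metabelian associative algebra `F = P/T` of rank `2d`. -/
abbrev F (K : Type) [Field K] (d : ℕ) : Type := RingQuot (metaRel K d)

/-- The two-sided ideal `T = P'·P' ⊆ P` generated by all products of two commutators. -/
noncomputable def T (K : Type) [Field K] (d : ℕ) : TwoSidedIdeal (P K d) :=
  TwoSidedIdeal.span {p : P K d |
    ∃ a b c e : P K d, p = (a * b - b * a) * (c * e - e * c)}

/-- The polynomial ring `R = K[y_1, …, y_{2d}]`. -/
abbrev R (K : Type) [Field K] (d : ℕ) : Type := MvPolynomial (ι d) K

/-- The polynomial ring `S = K[u_1, …, u_{2d}, v'_1, …, v'_{2d}]`; the variable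
`X (Sum.inl j)` is `u_j` and `X (Sum.inr j)` is `v'_j`. -/
abbrev S (K : Type) [Field K] (d : ℕ) : Type := MvPolynomial (ι d ⊕ ι d) K

/-- The free `S`-module `M` with basis `a_1, …, a_{2d}`. -/
abbrev M (K : Type) [Field K] (d : ℕ) : Type := ι d → S K d

variable (K : Type) [Field K] (d : ℕ)

/-- The basis element `a_j` of `M`. -/
noncomputable def a (j : ι d) : M K d := Pi.single j 1

/-- `y_j ↦ u_j`. -/
noncomputable def lam : R K d →ₐ[K] S K d :=
  MvPolynomial.rename (Sum.inl : ι d → ι d ⊕ ι d)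

/-- `y_j ↦ v'_j`. -/
noncomputable def rho : R K d →ₐ[K] S K d :=
  MvPolynomial.rename (Sum.inr : ι d → ι d ⊕ ι d)

/-- The left `R`-action on `M`: `y_j` acts as scalar multiplication by `u_j`. -/
noncomputable instance : Module (R K d) (M K d) :=
  Module.compHom _ (lam K d).toRingHom

/-- The right `R`-action on `M`: `y_j` acts as scalar multiplication by `v'_j`. -/
noncomputable instance : Module (R K d)ᵐᵒᵖ (M K d) :=
  Module.compHom _ (RingHom.fromOpposite (rho K d).toRingHom fun _ _ => mul_comm _ _)

instance : SMulCommClass (R K d) (R K d)ᵐᵒᵖ (M K d) := by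
  constructor
  intro r r' m
  show lam K d r • (rho K d r'.unop • m) = rho K d r'.unop • (lam K d r • m)
  rw [smul_smul, smul_smul, mul_comm]

instance : IsScalarTower K (R K d) (M K d) := by
  constructor
  intro c r m
  show lam K d (c • r) • m = c • (lam K d r • m)
  rw [map_smul]
  exact smul_assoc c (lam K d r) m

instance : IsScalarTower K (R K d)ᵐᵒᵖ (M K d) := by
  constructor
  intro c r m
  show rho K d (c • r).unop • m = c • (rho K d r.unop • m)
  rw [MulOpposite.unop_smul, map_smul]
  exact smul_assoc c (rho K d r.unop) m

/-- The wreath product `W = R ⋉ M`, the trivial square-zero extension of `R` by the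
`R`-bimodule `M`. -/
noncomputable abbrev W : Type := TrivSqZeroExt (R K d) (M K d)

/-- The unique `K`-algebra homomorphism `ε : P → W` with `ε(x_j) = (y_j, a_j)`. -/
noncomputable def ε : P K d →ₐ[K] W K d :=
  FreeAlgebra.lift K fun j =>
    TrivSqZeroExt.inl (MvPolynomial.X j) + TrivSqZeroExt.inr (a K d j)

/-- `u_j ∈ S`. -/
noncomputable def u (j : ι d) : S K d := X (Sum.inl j)

/-- `v_j = v'_j - u_j ∈ S`. -/
noncomputable def v (j : ι d) : S K d := X (Sum.inr j) - X (Sum.inl j)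

/-- The commutator ideal `P'` of `P`: the two-sided ideal generated by all commutators
`[a,b] = ab - ba`. -/
noncomputable def P' : TwoSidedIdeal (P K d) :=
  TwoSidedIdeal.span {p : P K d | ∃ a b : P K d, p = a * b - b * a}

/-!
Pairing with `v` sends the `M`-component of `ε p` to `rho r - lam r`, where `r` is the image of `p`
in `R`: both sides are derivations of `P` that agree on the generators. Hence a point `(0, f)` of
the image of `ε` is a syzygy of `v`. Conversely, the `v_j` form a regular sequence in every order,
because killing some of them only identifies variables of `S`, so their syzygies are spanned by the
Koszul relations `v_i a_j - v_j a_i = ε [x_j, x_i]`; multiplying by `x_k` on the left and on the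
right is multiplication by `u_k` and by `v'_k`, so `ε(P') ∩ M` is closed under all of `S`.
-/

section Koszul

variable {A σ : Type*} [CommRing A]

/-- A family of ring elements every finite enumeration of which is a weakly regular sequence: each
member is a nonzerodivisor modulo the ideal generated by any finitely many of the others. -/
def IsWeaklyRegularFamily (w : σ → A) : Prop :=
  ∀ s : Finset σ, ∀ j ∉ s, IsSMulRegular (A ⧸ Ideal.span (w '' s)) (w j)

variable [DecidableEq σ]

/-- The Koszul relation `w_i e_j - w_j e_i` between the members `w_i` and `w_j` of a family. -/
def koszulRelation (w : σ → A) (i j : σ) : σ → A :=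
  Pi.single j (w i) - Pi.single i (w j)

/-- The module of Koszul relations of a family, that is, the image of the second differential
of its Koszul complex. -/
def koszulModule (w : σ → A) : Submodule A (σ → A) :=
  Submodule.span A (Set.range fun p : σ × σ => koszulRelation w p.1 p.2)

lemma koszulRelation_mem_koszulModule (w : σ → A) (i j : σ) :
    koszulRelation w i j ∈ koszulModule w :=
  Submodule.subset_span ⟨(i, j), rfl⟩

lemma dotProduct_koszulRelation [Fintype σ] (w : σ → A) (i j : σ) :
    w ⬝ᵥ koszulRelation w i j = 0 := by
  rw [koszulRelation, dotProduct_sub, dotProduct_single, dotProduct_single, mul_comm, sub_self]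

lemma dotProduct_eq_zero_of_mem_koszulModule [Fintype σ] {w k : σ → A}
    (hk : k ∈ koszulModule w) : w ⬝ᵥ k = 0 := by
  induction hk using Submodule.span_induction with
  | mem _ h =>
    obtain ⟨p, rfl⟩ := h
    exact dotProduct_koszulRelation w p.1 p.2
  | zero => exact dotProduct_zero w
  | add _ _ _ _ hx hy => rw [dotProduct_add, hx, hy, add_zero]
  | smul c _ _ hx => rw [dotProduct_smul, hx, smul_zero]

lemma exists_mem_koszulModule_apply_eq (w : σ → A) {s : Finset σ} {j : σ} (hj : j ∉ s) {g : A}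
    (hg : g ∈ Ideal.span (w '' s)) :
    ∃ k ∈ koszulModule w, k j = g ∧ ∀ l ∉ insert j s, k l = 0 := by
  induction hg using Submodule.span_induction with
  | mem _ h =>
    obtain ⟨i, hi, rfl⟩ := h
    have hji : j ≠ i := fun h => hj (h ▸ hi)
    refine ⟨koszulRelation w i j, koszulRelation_mem_koszulModule w i j, ?_, fun l hl => ?_⟩
    · simp [koszulRelation, hji]
    · have hlj : l ≠ j := fun h => hl (h ▸ Finset.mem_insert_self j s)
      have hli : l ≠ i := fun h => hl (h ▸ Finset.mem_insert_of_mem hi)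
      simp [koszulRelation, hlj, hli]
  | zero => exact ⟨0, zero_mem _, rfl, fun _ _ => rfl⟩
  | add _ _ _ _ hx hy =>
    obtain ⟨k, hk, rfl, hk0⟩ := hx
    obtain ⟨k', hk', rfl, hk'0⟩ := hy
    exact ⟨k + k', add_mem hk hk', rfl, fun l hl => by simp [hk0 l hl, hk'0 l hl]⟩
  | smul c _ _ hx =>
    obtain ⟨k, hk, rfl, hk0⟩ := hx
    exact ⟨c • k, Submodule.smul_mem _ c hk, rfl, fun l hl => by simp [hk0 l hl]⟩

lemma mul_apply_mem_span_of_dotProduct_eq_zero [Fintype σ] {w f : σ → A} {s : Finset σ} {j : σ}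
    (hf : ∀ i ∉ insert j s, f i = 0) (h : w ⬝ᵥ f = 0) : w j * f j ∈ Ideal.span (w '' s) := by
  have hsum : w j * f j + ∑ i ∈ Finset.univ.erase j, w i * f i = 0 := by
    rwa [Finset.add_sum_erase _ (fun i => w i * f i) (Finset.mem_univ j)]
  rw [eq_neg_of_add_eq_zero_left hsum, neg_mem_iff]
  refine sum_mem fun i hi => ?_
  by_cases his : i ∈ s
  · exact Ideal.mul_mem_right _ _ (Ideal.subset_span ⟨i, his, rfl⟩)
  · rw [hf i (by simp [Finset.ne_of_mem_erase hi, his]), mul_zero]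
    exact zero_mem _

theorem IsWeaklyRegularFamily.mem_koszulModule_of_dotProduct_eq_zero [Fintype σ] {w f : σ → A}
    (hw : IsWeaklyRegularFamily w) (h : w ⬝ᵥ f = 0) : f ∈ koszulModule w := by
  suffices ∀ (s : Finset σ) (f : σ → A), (∀ i ∉ s, f i = 0) → w ⬝ᵥ f = 0 → f ∈ koszulModule w from
    this Finset.univ f (fun i hi => absurd (Finset.mem_univ i) hi) h
  intro s
  induction s using Finset.induction_on with
  | empty =>
    intro f hf _
    rw [show f = 0 from funext fun i => hf i (Finset.notMem_empty i)]
    exact zero_mem _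
  | insert j s hj ih =>
    intro f hf h
    have hfj : f j ∈ Ideal.span (w '' s) :=
      mem_of_isSMulRegular_quotient_of_smul_mem (hw s j hj)
        (mul_apply_mem_span_of_dotProduct_eq_zero hf h)
    obtain ⟨k, hk, hkj, hk0⟩ := exists_mem_koszulModule_apply_eq w hj hfj
    refine (Submodule.sub_mem_iff_left _ hk).mp (ih (f - k) (fun i hi => ?_) ?_)
    · rw [Pi.sub_apply]
      by_cases hij : i = j
      · rw [hij, hkj, sub_self]
      · have hi' : i ∉ insert j s := by simp [hij, hi]
        rw [hf i hi', hk0 i hi', sub_zero]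
    · rw [dotProduct_sub, h, dotProduct_eq_zero_of_mem_koszulModule hk, sub_zero]

end Koszul

section Diagonal

variable (A : Type*) {σ : Type*} [CommRing A]

/-- The generators `v'_j - u_j` of the ideal of the diagonal in `A[u, v']`, where
`u_j = X (Sum.inl j)` and `v'_j = X (Sum.inr j)`. -/
noncomputable def diagonalGenerator (j : σ) : MvPolynomial (σ ⊕ σ) A :=
  X (Sum.inr j) - X (Sum.inl j)

lemma diagonalGenerator_ne_zero [Nontrivial A] (j : σ) : diagonalGenerator A j ≠ 0 :=
  sub_ne_zero.mpr fun h => Sum.inr_ne_inl (X_injective h)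

section IdentifyVars

variable [DecidableEq σ]

/-- The substitution `v'_j ↦ u_j` for `j ∈ s`, which realises the quotient of `A[u, v']` by the
diagonal generators indexed by `s` as a subring of `A[u, v']`. -/
noncomputable def identifyVars (s : Finset σ) :
    MvPolynomial (σ ⊕ σ) A →ₐ[A] MvPolynomial (σ ⊕ σ) A :=
  rename (Sum.elim Sum.inl fun j => if j ∈ s then Sum.inl j else Sum.inr j)

variable {A} {s : Finset σ} {j : σ}

lemma identifyVars_diagonalGenerator_of_mem (hj : j ∈ s) :
    identifyVars A s (diagonalGenerator A j) = 0 := by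
  simp [identifyVars, diagonalGenerator, hj]

lemma identifyVars_diagonalGenerator_of_notMem (hj : j ∉ s) :
    identifyVars A s (diagonalGenerator A j) = diagonalGenerator A j := by
  simp [identifyVars, diagonalGenerator, hj]

lemma mk_identifyVars (g : MvPolynomial (σ ⊕ σ) A) :
    Ideal.Quotient.mk (Ideal.span (diagonalGenerator A '' s)) (identifyVars A s g) =
      Ideal.Quotient.mk (Ideal.span (diagonalGenerator A '' s)) g := by
  suffices (Ideal.Quotient.mkₐ A (Ideal.span (diagonalGenerator A '' s))).comp
      (identifyVars A s) = Ideal.Quotient.mkₐ A _ from DFunLike.congr_fun this g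
  refine algHom_ext fun i => ?_
  rcases i with j | j
  · simp [identifyVars]
  · by_cases hj : j ∈ s
    · have hdiff : diagonalGenerator A j ∈ Ideal.span (diagonalGenerator A '' s) :=
        Ideal.subset_span ⟨j, hj, rfl⟩
      simpa [identifyVars, hj] using (Ideal.Quotient.mk_eq_mk_iff_sub_mem _ _).mpr hdiff |>.symm
    · simp [identifyVars, hj]

lemma identifyVars_eq_zero_iff {g : MvPolynomial (σ ⊕ σ) A} :
    identifyVars A s g = 0 ↔ g ∈ Ideal.span (diagonalGenerator A '' s) := by
  constructor
  · intro hg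
    rw [← Ideal.Quotient.eq_zero_iff_mem, ← mk_identifyVars, hg, map_zero]
  · have hle : Ideal.span (diagonalGenerator A '' s) ≤ RingHom.ker (identifyVars A s) := by
      rw [Ideal.span_le]
      rintro _ ⟨j, hj, rfl⟩
      exact identifyVars_diagonalGenerator_of_mem hj
    exact fun hg => hle hg

end IdentifyVars

theorem isWeaklyRegularFamily_diagonalGenerator [IsDomain A] :
    IsWeaklyRegularFamily (diagonalGenerator A : σ → MvPolynomial (σ ⊕ σ) A) := by
  classical
  intro s j hj
  rw [isSMulRegular_quotient_iff_mem_of_smul_mem]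
  intro g hg
  rw [← identifyVars_eq_zero_iff, smul_eq_mul, map_mul,
    identifyVars_diagonalGenerator_of_notMem hj] at hg
  exact identifyVars_eq_zero_iff.mp
    ((mul_eq_zero.mp hg).resolve_left (diagonalGenerator_ne_zero A j))

end Diagonal

section Wreath

open TrivSqZeroExt (inl inr)

lemma isWeaklyRegularFamily_v : IsWeaklyRegularFamily (v K d) :=
  isWeaklyRegularFamily_diagonalGenerator K

lemma sum_smul_a (f : ι d → S K d) : ∑ j : ι d, f j • a K d j = f :=
  (pi_eq_sum_univ' f).symm

variable {K d}

lemma lam_X (j : ι d) : lam K d (X j) = X (Sum.inl j) := rename_X _ _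

lemma rho_X (j : ι d) : rho K d (X j) = X (Sum.inr j) := rename_X _ _

lemma smul_eq_lam_smul (r : R K d) (m : M K d) : r • m = lam K d r • m := rfl

lemma op_smul_eq_rho_smul (r : R K d) (m : M K d) : MulOpposite.op r • m = rho K d r • m := rfl

lemma ε_ι (j : ι d) : ε K d (FreeAlgebra.ι K j) = inl (X j) + inr (a K d j) :=
  FreeAlgebra.lift_ι_apply _ _

theorem v_dotProduct_snd_ε (p : P K d) :
    v K d ⬝ᵥ (ε K d p).snd = rho K d (ε K d p).fst - lam K d (ε K d p).fst := by
  induction p using FreeAlgebra.induction with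
  | grade0 c => simp [TrivSqZeroExt.algebraMap_eq_inl', MvPolynomial.algebraMap_eq, lam, rho]
  | grade1 j => simp [ε_ι, a, v, lam_X, rho_X]
  | mul p q hp hq =>
    rw [map_mul, TrivSqZeroExt.snd_mul, TrivSqZeroExt.fst_mul, smul_eq_lam_smul,
      op_smul_eq_rho_smul, dotProduct_add, dotProduct_smul, dotProduct_smul, hp, hq, map_mul,
      map_mul, smul_eq_mul, smul_eq_mul]
    ring
  | add p q hp hq =>
    rw [map_add, TrivSqZeroExt.snd_add, TrivSqZeroExt.fst_add, dotProduct_add, hp, hq, map_add,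
      map_add]
    ring

lemma v_dotProduct_eq_zero_of_ε_eq_inr {p : P K d} {m : M K d} (h : ε K d p = inr m) :
    v K d ⬝ᵥ m = 0 := by
  simpa [h] using v_dotProduct_snd_ε p

lemma ε_ι_mul_of_eq_inr {p : P K d} {m : M K d} (h : ε K d p = inr m) (j : ι d) :
    ε K d (FreeAlgebra.ι K j * p) = inr ((X (Sum.inl j) : S K d) • m) := by
  rw [map_mul, h, ε_ι, add_mul, TrivSqZeroExt.inl_mul_inr, TrivSqZeroExt.inr_mul_inr, add_zero,
    smul_eq_lam_smul, lam_X]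

lemma ε_mul_ι_of_eq_inr {p : P K d} {m : M K d} (h : ε K d p = inr m) (j : ι d) :
    ε K d (p * FreeAlgebra.ι K j) = inr ((X (Sum.inr j) : S K d) • m) := by
  rw [map_mul, h, ε_ι, mul_add, TrivSqZeroExt.inr_mul_inl, TrivSqZeroExt.inr_mul_inr, add_zero,
    op_smul_eq_rho_smul, rho_X]

lemma ε_algebraMap_mul_of_eq_inr {p : P K d} {m : M K d} (h : ε K d p = inr m) (c : K) :
    ε K d (algebraMap K (P K d) c * p) = inr ((C c : S K d) • m) := by
  rw [map_mul, AlgHom.commutes, h, TrivSqZeroExt.algebraMap_eq_inl', TrivSqZeroExt.inl_mul_inr,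
    smul_eq_lam_smul, AlgHom.commutes, MvPolynomial.algebraMap_eq]

lemma exists_mem_P'_ε_eq_inr_add {m n : M K d} (hm : ∃ p ∈ P' K d, ε K d p = inr m)
    (hn : ∃ p ∈ P' K d, ε K d p = inr n) : ∃ p ∈ P' K d, ε K d p = inr (m + n) := by
  obtain ⟨p, hp, hpm⟩ := hm
  obtain ⟨q, hq, hqn⟩ := hn
  exact ⟨p + q, (P' K d).add_mem hp hq, by rw [map_add, hpm, hqn, TrivSqZeroExt.inr_add]⟩

lemma exists_mem_P'_ε_eq_inr_smul (s : S K d) {m : M K d}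
    (hm : ∃ p ∈ P' K d, ε K d p = inr m) : ∃ p ∈ P' K d, ε K d p = inr (s • m) := by
  induction s using MvPolynomial.induction_on generalizing m with
  | C c =>
    obtain ⟨p, hp, h⟩ := hm
    exact ⟨_, (P' K d).mul_mem_left _ _ hp, ε_algebraMap_mul_of_eq_inr h c⟩
  | add s t hs ht =>
    rw [add_smul]
    exact exists_mem_P'_ε_eq_inr_add (hs hm) (ht hm)
  | mul_X s i hs =>
    rw [mul_smul]
    apply hs
    obtain ⟨p, hp, h⟩ := hm
    rcases i with j | j
    · exact ⟨_, (P' K d).mul_mem_left _ _ hp, ε_ι_mul_of_eq_inr h j⟩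
    · exact ⟨_, (P' K d).mul_mem_right _ _ hp, ε_mul_ι_of_eq_inr h j⟩

variable (K d) in
/-- The intersection `ε(P') ∩ M`, as an `S`-submodule of `M`. -/
def commutatorImage : Submodule (S K d) (M K d) where
  carrier := {m | ∃ p ∈ P' K d, ε K d p = inr m}
  zero_mem' := ⟨0, (P' K d).zero_mem, by rw [map_zero, TrivSqZeroExt.inr_zero]⟩
  add_mem' hm hn := exists_mem_P'_ε_eq_inr_add hm hn
  smul_mem' s _ hm := exists_mem_P'_ε_eq_inr_smul s hm

lemma ε_commutator_ι (i j : ι d) :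
    ε K d (FreeAlgebra.ι K j * FreeAlgebra.ι K i - FreeAlgebra.ι K i * FreeAlgebra.ι K j) =
      inr (koszulRelation (v K d) i j) := by
  have single_eq (k l : ι d) : Pi.single k (v K d l) = v K d l • a K d k := by
    rw [a, ← Pi.single_smul, smul_eq_mul, mul_one]
  rw [map_sub, map_mul, map_mul, ε_ι, ε_ι, koszulRelation, single_eq, single_eq]
  apply TrivSqZeroExt.ext
  · simp [mul_comm]
  · simp only [TrivSqZeroExt.snd_sub, TrivSqZeroExt.snd_mul, TrivSqZeroExt.snd_add,
      TrivSqZeroExt.snd_inl, TrivSqZeroExt.snd_inr, TrivSqZeroExt.fst_add, TrivSqZeroExt.fst_inl,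
      TrivSqZeroExt.fst_inr, zero_add, add_zero, smul_eq_lam_smul, op_smul_eq_rho_smul, lam_X,
      rho_X, v, sub_smul]
    abel

theorem koszulModule_v_le_commutatorImage : koszulModule (v K d) ≤ commutatorImage K d := by
  rw [koszulModule, Submodule.span_le]
  rintro _ ⟨⟨i, j⟩, rfl⟩
  exact ⟨_, TwoSidedIdeal.subset_span ⟨_, _, rfl⟩, ε_commutator_ι i j⟩

end Wreath

theorem stmt6_general (f : ι d → S K d) :
    (∃ p ∈ P' K d, ε K d p = TrivSqZeroExt.inr (∑ j : ι d, f j • a K d j)) ↔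
      ∑ j : ι d, v K d j * f j = 0 := by
  rw [sum_smul_a]
  constructor
  · rintro ⟨p, -, h⟩
    exact v_dotProduct_eq_zero_of_ε_eq_inr h
  · intro h
    exact koszulModule_v_le_commutatorImage
      ((isWeaklyRegularFamily_v K d).mem_koszulModule_of_dotProduct_eq_zero h)

/-- For `f_1, …, f_{2d} ∈ S`, the element `(0, f_1·a_1 + ⋯ + f_{2d}·a_{2d})` of `W`
belongs to `ε(P')` if and only if `v_1 f_1 + ⋯ + v_{2d} f_{2d} = 0` in `S`. -/
theorem stmt6 [CharZero K] (hd : 1 ≤ d) (f : ι d → S K d) :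
    (∃ p ∈ P' K d, ε K d p = TrivSqZeroExt.inr (∑ j : ι d, f j • a K d j)) ↔
      ∑ j : ι d, v K d j * f j = 0 :=
  stmt6_general K d f

end Stmt6
end
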